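/- arXiv:2212.11463 — 2 statements merged into one kernel-verified Lean document; each statement's English description precedes it below -/
import Mathlib

section
/- Let n ≥ 2 and 𝐚 = (a₁,a₂) ∈ [1,∞)² with a₁ ≤ n and a₂ ≤ n. Then there is a constant C such that for all nonnegative measurable f, g on ℝⁿ and all x ∈ ℝⁿ: 𝔐^𝐚(f,g)(x) ≤ C · Mf(x) · ℳ_s g(x), and 𝔐^𝐚(f,g)(x) ≤ C · ℳ_s f(x) · Mg(x). -/
open MeasureTheory Metric Set
open scoped ENNReal NNReal

noncomputable section

abbrev Rn (n : ℕ) : Type := EuclideanSpace ℝ (Fin n)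

/-- The degenerate surface `S₂^𝐚 = {(y,z) : |y|^{a₁} + |z|^{a₂} = 1} ⊆ ℝⁿ × ℝⁿ`. -/
def S2 (n : ℕ) (a₁ a₂ : ℝ) : Set (Rn n × Rn n) := {p | ‖p.1‖ ^ a₁ + ‖p.2‖ ^ a₂ = 1}

/-- The normalized surface measure on `S₂^𝐚`, realized as the normalized
`(2n-1)`-dimensional Hausdorff measure restricted to the surface. -/
def μS2 (n : ℕ) (a₁ a₂ : ℝ) : Measure (Rn n × Rn n) :=
  (μH[(2 * (n : ℝ) - 1)] (S2 n a₁ a₂))⁻¹ • (μH[(2 * (n : ℝ) - 1)]).restrict (S2 n a₁ a₂)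

/-- The bilinear average `𝒜^𝐚_{(t₁,t₂)}(f,g)(x)` of nonnegative functions,
as an `ℝ≥0∞`-valued integral. -/
def biAvgE (n : ℕ) (a₁ a₂ : ℝ) (f g : Rn n → ℝ) (t₁ t₂ : ℝ) (x : Rn n) : ℝ≥0∞ :=
  ∫⁻ p, ENNReal.ofReal (f (x - t₁ • p.1)) * ENNReal.ofReal (g (x - t₂ • p.2)) ∂(μS2 n a₁ a₂)

/-- Surface measure on the unit sphere `𝕊^{n-1} ⊆ ℝⁿ`: the `(n-1)`-dimensional
Hausdorff measure restricted to the sphere. -/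
def μSph (n : ℕ) : Measure (Rn n) :=
  (μH[((n : ℝ) - 1)]).restrict (sphere (0 : Rn n) 1)

/-- The spherical average `𝔄g(x,t) = ∫_{𝕊^{n-1}} g(x - tθ) dσ(θ)` for nonnegative `g`. -/
def sphAvgE (n : ℕ) (g : Rn n → ℝ) (x : Rn n) (t : ℝ) : ℝ≥0∞ :=
  ∫⁻ θ, ENNReal.ofReal (g (x - t • θ)) ∂(μSph n)

/-- The weight `ω_𝐚(y) = (1 - |y|^{a₁})^{1/a₂}`. -/
def omegaW (a₁ a₂ : ℝ) {n : ℕ} (y : Rn n) : ℝ := (1 - ‖y‖ ^ a₁) ^ (1 / a₂)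

/-- The biparametric bilinear maximal function `𝔐^𝐚(f,g)` (for nonnegative `f`, `g`). -/
def biMaxE (n : ℕ) (a₁ a₂ : ℝ) (f g : Rn n → ℝ) (x : Rn n) : ℝ≥0∞ :=
  ⨆ t₁ ∈ Ioi (0 : ℝ), ⨆ t₂ ∈ Ioi (0 : ℝ), biAvgE n a₁ a₂ f g t₁ t₂ x

/-- The Hardy–Littlewood maximal function on `ℝⁿ`. -/
def HLMax (n : ℕ) (f : Rn n → ℝ) (x : Rn n) : ℝ≥0∞ :=
  ⨆ r ∈ Ioi (0 : ℝ), (∫⁻ y in ball x r, ENNReal.ofReal |f y|) / volume (ball x r)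

/-- The spherical maximal function `ℳ_s`. -/
def sphMax (n : ℕ) (f : Rn n → ℝ) (x : Rn n) : ℝ≥0∞ :=
  ⨆ t ∈ Ioi (0 : ℝ), sphAvgE n f x t


lemma vitali_cover {X : Type*} [MetricSpace X] [MeasurableSpace X] [BorelSpace X]
    (ν : Measure X) [IsFiniteMeasure ν] (s : ℝ) (hs : 0 < s) (c : ℝ) (hc : 0 < c)
    (E U : Set X) (hU : IsOpen U) (hEU : E ⊆ U)
    (h : ∀ p ∈ E, ∃ r0 > 0, ∀ r, 0 < r → r ≤ r0 → ENNReal.ofReal (c * r ^ s) ≤ ν (closedBall p r))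
    (δ : ℝ) (hδ : 0 < δ) :
    ∃ u : Set X, u.Countable ∧ ∃ ρ : X → ℝ,
      (∀ i : u, ediam (closedBall (i : X) (5 * ρ i)) ≤ ENNReal.ofReal δ) ∧
      E ⊆ ⋃ i : u, closedBall (i : X) (5 * ρ i) ∧
      ∑' i : u, ediam (closedBall (i : X) (5 * ρ i)) ^ s ≤ ENNReal.ofReal (10 ^ s / c) * ν U := by
  have h1 : ∀ p : X, ∃ r : ℝ, p ∈ E → (0 < r ∧ 10 * r ≤ δ ∧ closedBall p r ⊆ U ∧
      ENNReal.ofReal (c * r ^ s) ≤ ν (closedBall p r)) := by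
    intro p
    by_cases hp : p ∈ E
    · obtain ⟨r0, hr0, h⟩ := h p hp
      obtain ⟨r1, hr1, hb⟩ := Metric.nhds_basis_closedBall.mem_iff.1 (hU.mem_nhds (hEU hp))
      refine ⟨min r0 (min r1 (δ / 10)), fun _ => ?_⟩
      have hpos : 0 < min r0 (min r1 (δ / 10)) := by positivity
      refine ⟨hpos, ?_, ?_, ?_⟩
      · have : min r0 (min r1 (δ / 10)) ≤ δ / 10 := (min_le_right _ _).trans (min_le_right _ _)
        linarith
      · exact (closedBall_subset_closedBall ((min_le_right _ _).trans (min_le_left _ _))).trans hb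
      · exact h _ hpos (min_le_left _ _)
    · exact ⟨0, fun h => absurd h hp⟩
  choose ρ hρ using h1
  obtain ⟨u, hut, hdisj, hcov⟩ := Vitali.exists_disjoint_subfamily_covering_enlargement_closedBall
    E (fun p => p) ρ (δ / 10) (fun a ha => by linarith [(hρ a ha).2.1]) 5 (by norm_num)
  have hucount : u.Countable := by
    have := Measure.countable_meas_pos_of_disjoint_iUnion₀ (μ := ν) (As := fun i : u => closedBall (i : X) (ρ i))
      (fun i => isClosed_closedBall.measurableSet.nullMeasurableSet)
      (fun i j hij => (hdisj i.2 j.2 (fun h => hij (Subtype.ext h))).aedisjoint)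
    have h2 : {i : u | 0 < ν (closedBall (i : X) (ρ i))} = univ := by
      ext i
      simp only [mem_ofPred_eq, mem_univ, iff_true]
      obtain ⟨a, b, d, e⟩ := hρ i (hut i.2)
      refine lt_of_lt_of_le ?_ e
      rw [ENNReal.ofReal_pos]
      positivity
    rw [h2] at this
    exact countable_coe_iff.1 (countable_univ_iff.1 this)
  have hdiam : ∀ i ∈ u, ediam (closedBall (i : X) (5 * ρ i)) ≤ ENNReal.ofReal (10 * ρ i) := by
    intro i hi
    obtain ⟨a, b, d, e⟩ := hρ i (hut hi)
    have : closedBall (i : X) (5 * ρ i) = Metric.closedEBall i (ENNReal.ofReal (5 * ρ i)) := by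
      rw [Metric.closedEBall_ofReal (by positivity)]
    rw [this]
    refine Metric.ediam_closedEBall_le.trans (le_of_eq ?_)
    rw [show (2 : ℝ≥0∞) = ENNReal.ofReal 2 by simp, ← ENNReal.ofReal_mul (by norm_num)]
    congr 1; ring
  refine ⟨u, hucount, ρ, ?_, ?_, ?_⟩
  · intro i
    exact (hdiam i i.2).trans (ENNReal.ofReal_le_ofReal (hρ i (hut i.2)).2.1)
  · intro p hp
    obtain ⟨b, hb, hsub⟩ := hcov p hp
    exact mem_iUnion.2 ⟨⟨b, hb⟩, hsub (mem_closedBall_self (hρ p hp).1.le)⟩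
  · have := hucount.to_subtype
    calc ∑' i : u, ediam (closedBall (i : X) (5 * ρ i)) ^ s
        ≤ ∑' i : u, ENNReal.ofReal (10 ^ s / c) * ν (closedBall (i : X) (ρ i)) := by
          refine ENNReal.tsum_le_tsum fun i => ?_
          obtain ⟨a, b, d, e⟩ := hρ i (hut i.2)
          refine (ENNReal.rpow_le_rpow (hdiam i i.2) hs.le).trans ?_
          refine le_trans (le_of_eq ?_) (mul_le_mul_right e _)
          rw [← ENNReal.ofReal_mul (by positivity), ENNReal.ofReal_rpow_of_pos (by positivity),
            Real.mul_rpow (by norm_num) a.le]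
          congr 1
          field_simp
      _ = ENNReal.ofReal (10 ^ s / c) * ∑' i : u, ν (closedBall (i : X) (ρ i)) := ENNReal.tsum_mul_left
      _ ≤ ENNReal.ofReal (10 ^ s / c) * ν U := by
          gcongr
          rw [← measure_iUnion (f := fun i : u => closedBall (i : X) (ρ i))
            (fun i j hij => (hdisj i.2 j.2 (fun h => hij (Subtype.ext h))))
            (fun i => isClosed_closedBall.measurableSet)]
          exact measure_mono (iUnion_subset fun i => (hρ i (hut i.2)).2.2.1)

lemma hausdorff_le_of_ball {X : Type*} [MetricSpace X] [MeasurableSpace X] [BorelSpace X]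
    (ν : Measure X) [IsFiniteMeasure ν] (s : ℝ) (hs : 0 < s) (c : ℝ) (hc : 0 < c)
    (E : Set X)
    (h : ∀ p ∈ E, ∃ r0 > 0, ∀ r, 0 < r → r ≤ r0 → ENNReal.ofReal (c * r ^ s) ≤ ν (closedBall p r)) :
    μH[s] E ≤ ENNReal.ofReal (10 ^ s / c) * ν E := by
  have key : ∀ U, E ⊆ U → IsOpen U → μH[s] E ≤ ENNReal.ofReal (10 ^ s / c) * ν U := by
    intro U hEU hU
    have := fun m : ℕ => vitali_cover ν s hs c hc E U hU hEU h (1 / ((m : ℝ) + 1)) (by positivity)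
    choose u hu ρ h1 h2 h3 using this
    have : ∀ m, Countable (u m) := fun m => (hu m).to_subtype
    refine (Measure.hausdorffMeasure_le_liminf_tsum (l := Filter.atTop) s E
      (fun m : ℕ => ENNReal.ofReal (1 / ((m : ℝ) + 1))) ?_
      (fun m (i : u m) => closedBall (i : X) (5 * ρ m i)) (Filter.Eventually.of_forall h1)
      (Filter.Eventually.of_forall h2)).trans ?_
    · have := ENNReal.tendsto_ofReal (tendsto_one_div_add_atTop_nhds_zero_nat (𝕜 := ℝ))
      simpa using this
    · refine Filter.liminf_le_of_frequently_le' (Filter.Frequently.of_forall h3)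
  have hK : ENNReal.ofReal (10 ^ s / c) ≠ 0 := by
    rw [Ne, ENNReal.ofReal_eq_zero, not_le]; positivity
  rw [mul_comm, ← ENNReal.div_le_iff_le_mul (Or.inl hK) (Or.inl ENNReal.ofReal_ne_top)]
  rw [E.measure_eq_iInf_isOpen ν]
  refine le_iInf fun U => le_iInf fun hEU => le_iInf fun hU => ?_
  have := key U hEU hU
  rwa [mul_comm, ← ENNReal.div_le_iff_le_mul (Or.inl hK) (Or.inl ENNReal.ofReal_ne_top)] at this

def Nm {n : ℕ} (w : Rn n) : Rn n := ‖w‖⁻¹ • w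

lemma measurable_Nm {n : ℕ} : Measurable (Nm (n := n)) := by
  unfold Nm; fun_prop

lemma norm_Nm {n : ℕ} {w : Rn n} (hw : w ≠ 0) : ‖Nm w‖ = 1 := by
  unfold Nm
  rw [norm_smul, norm_inv, norm_norm, inv_mul_cancel₀ (norm_ne_zero_iff.2 hw)]

lemma norm_Nm_le {n : ℕ} (w : Rn n) : ‖Nm w‖ ≤ 1 := by
  by_cases hw : w = 0
  · simp [Nm, hw]
  · exact (norm_Nm hw).le

lemma norm_smul_Nm {n : ℕ} (w : Rn n) : ‖w‖ • Nm w = w := by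
  by_cases hw : w = 0
  · simp [Nm, hw]
  · unfold Nm
    rw [smul_smul, mul_inv_cancel₀ (norm_ne_zero_iff.2 hw), one_smul]

/-- (Un-normalised) surface measure on the sphere, as a push-forward. -/
def sig (n : ℕ) : Measure (Rn n) := Measure.map Nm (volume.restrict (ball (0 : Rn n) 1))

lemma sig_apply {n : ℕ} {A : Set (Rn n)} (hA : MeasurableSet A) :
    sig n A = volume (Nm ⁻¹' A ∩ ball (0 : Rn n) 1) := by
  unfold sig
  rw [Measure.map_apply measurable_Nm hA, Measure.restrict_apply (measurable_Nm hA)]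

lemma vol_ball {n : ℕ} (x : Rn n) {r : ℝ} (hr : 0 < r) :
    volume (ball x r) = ENNReal.ofReal (r ^ n) * volume (ball (0 : Rn n) 1) := by
  rw [Measure.addHaar_ball_of_pos _ _ hr]; simp

lemma vol_closedBall {n : ℕ} (x : Rn n) {r : ℝ} (hr : 0 < r) :
    volume (closedBall x r) = ENNReal.ofReal (r ^ n) * volume (ball (0 : Rn n) 1) := by
  rw [Measure.addHaar_closedBall _ _ hr.le]; simp

lemma sig_lower {n : ℕ} (hn : 2 ≤ n) {θ : Rn n} (hθ : ‖θ‖ = 1) {r : ℝ} (hr : 0 < r) (hr1 : r ≤ 1) :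
    ENNReal.ofReal (r ^ (n - 1) / 8 ^ n) * volume (ball (0 : Rn n) 1) ≤ sig n (closedBall θ r) := by
  rw [sig_apply isClosed_closedBall.measurableSet]
  set N := ⌈1 / r⌉₊ with hN
  let t : ℕ → ℝ := fun k => 1 / 2 + k * r / 4
  have hsub : ∀ k < N, ball (t k • θ) (r / 8) ⊆ Nm ⁻¹' (closedBall θ r) ∩ ball (0 : Rn n) 1 := by
    intro k hk w hw
    have hk' : (k : ℝ) * r < 1 := by
      have := Nat.lt_ceil.1 hk
      rwa [lt_div_iff₀ hr] at this
    have ht1 : 1 / 2 ≤ t k := by simp only [t]; have : (0:ℝ) ≤ k * r := by positivity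
                                 linarith
    have ht2 : t k ≤ 3 / 4 := by simp only [t]; linarith
    rw [mem_ball, dist_eq_norm] at hw
    have htn : ‖t k • θ‖ = t k := by
      rw [norm_smul, hθ, mul_one, Real.norm_of_nonneg (by linarith)]
    have h1 : |‖w‖ - t k| ≤ ‖w - t k • θ‖ := by
      have := abs_norm_sub_norm_le w (t k • θ)
      rwa [htn] at this
    have h1' := abs_le.1 h1
    have hwpos : 3 / 8 ≤ ‖w‖ := by linarith
    refine ⟨?_, ?_⟩
    · rw [mem_preimage, mem_closedBall, dist_eq_norm]
      have h2 : ‖w‖ * ‖Nm w - θ‖ ≤ r / 4 := by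
        calc ‖w‖ * ‖Nm w - θ‖ = ‖‖w‖ • (Nm w - θ)‖ := by rw [norm_smul, norm_norm]
          _ = ‖(w - t k • θ) + (t k - ‖w‖) • θ‖ := by
            rw [smul_sub, norm_smul_Nm]; congr 1; module
          _ ≤ ‖w - t k • θ‖ + ‖(t k - ‖w‖) • θ‖ := norm_add_le _ _
          _ ≤ r / 4 := by
            rw [norm_smul, hθ, mul_one, Real.norm_eq_abs, abs_sub_comm]; linarith
      nlinarith [norm_nonneg (Nm w - θ)]
    · rw [mem_ball_zero_iff]; linarith
  have hdisj : (↑(Finset.range N) : Set ℕ).PairwiseDisjoint (fun k => ball (t k • θ) (r / 8)) := by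
    intro i _ j _ hij
    refine ball_disjoint_ball ?_
    rw [dist_eq_norm, ← sub_smul, norm_smul, hθ, mul_one, Real.norm_eq_abs]
    have h1 : t i - t j = ((i : ℝ) - j) * (r / 4) := by simp only [t]; ring
    rw [h1, abs_mul, abs_of_pos (show 0 < r / 4 by positivity)]
    have h2 : (1 : ℝ) ≤ |(i : ℝ) - j| := by
      have : (1 : ℤ) ≤ |(i : ℤ) - j| := Int.one_le_abs (by omega)
      exact_mod_cast this
    nlinarith
  calc ENNReal.ofReal (r ^ (n - 1) / 8 ^ n) * volume (ball (0 : Rn n) 1)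
      ≤ N * (ENNReal.ofReal ((r / 8) ^ n) * volume (ball (0 : Rn n) 1)) := by
        rw [← mul_assoc]
        gcongr
        rw [← ENNReal.ofReal_natCast, ← ENNReal.ofReal_mul (by positivity)]
        apply ENNReal.ofReal_le_ofReal
        have h1 : 1 / r ≤ N := Nat.le_ceil _
        calc r ^ (n - 1) / 8 ^ n = 1 / r * (r / 8) ^ n := by
              obtain ⟨m, rfl⟩ : ∃ m, n = m + 1 := ⟨n - 1, by omega⟩
              rw [div_pow, pow_succ r]; simp; field_simp
          _ ≤ _ := by gcongr
    _ = ∑ k ∈ Finset.range N, volume (ball (t k • θ) (r / 8)) := by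
        simp_rw [vol_ball _ (show 0 < r / 8 by positivity)]
        simp
    _ = volume (⋃ k ∈ Finset.range N, ball (t k • θ) (r / 8)) :=
        (measure_biUnion_finset hdisj fun _ _ => measurableSet_ball).symm
    _ ≤ _ := measure_mono (iUnion₂_subset fun k hk => hsub k (Finset.mem_range.1 hk))

lemma sig_upper {n : ℕ} (hn : 2 ≤ n) {θ : Rn n} (hθ : ‖θ‖ = 1) {d : ℝ} (hd : 0 < d) (hd1 : d ≤ 1) :
    sig n (closedBall θ d) ≤
      ENNReal.ofReal (2 * 2 ^ n * d ^ (n - 1)) * volume (ball (0 : Rn n) 1) := by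
  rw [sig_apply isClosed_closedBall.measurableSet]
  set N := ⌊1 / d⌋₊ + 1 with hN
  have hsub : Nm ⁻¹' (closedBall θ d) ∩ ball (0 : Rn n) 1 ⊆
      ⋃ k ∈ Finset.range N, closedBall (((k : ℝ) * d) • θ) (2 * d) := by
    rintro w ⟨hw1, hw2⟩
    rw [mem_preimage, mem_closedBall, dist_eq_norm] at hw1
    rw [mem_ball_zero_iff] at hw2
    refine mem_iUnion₂.2 ⟨⌊‖w‖ / d⌋₊, ?_, ?_⟩
    · rw [Finset.mem_range, hN, Nat.lt_succ_iff]
      apply Nat.floor_le_floor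
      gcongr
    · have h1 : (⌊‖w‖ / d⌋₊ : ℝ) * d ≤ ‖w‖ := by
        rw [← le_div_iff₀ hd]; exact Nat.floor_le (by positivity)
      have h2 : ‖w‖ < ((⌊‖w‖ / d⌋₊ : ℝ) + 1) * d := by
        rw [← div_lt_iff₀ hd]; exact Nat.lt_floor_add_one _
      set k : ℝ := (⌊‖w‖ / d⌋₊ : ℝ)
      rw [mem_closedBall, dist_eq_norm]
      calc ‖w - (k * d) • θ‖ = ‖‖w‖ • (Nm w - θ) + (‖w‖ - k * d) • θ‖ := by
            rw [smul_sub, norm_smul_Nm]; congr 1; module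
        _ ≤ ‖‖w‖ • (Nm w - θ)‖ + ‖(‖w‖ - k * d) • θ‖ := norm_add_le _ _
        _ = ‖w‖ * ‖Nm w - θ‖ + (‖w‖ - k * d) := by
            rw [norm_smul, norm_smul, norm_norm, hθ, mul_one, Real.norm_of_nonneg (by linarith)]
        _ ≤ 2 * d := by nlinarith [norm_nonneg (Nm w - θ), norm_nonneg w]
  calc _ ≤ volume (⋃ k ∈ Finset.range N, closedBall (((k : ℝ) * d) • θ) (2 * d)) := measure_mono hsub
    _ ≤ ∑ k ∈ Finset.range N, volume (closedBall (((k : ℝ) * d) • θ) (2 * d)) :=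
        measure_biUnion_finset_le _ _
    _ = N * (ENNReal.ofReal ((2 * d) ^ n) * volume (ball (0 : Rn n) 1)) := by
        simp_rw [vol_closedBall _ (show 0 < 2 * d by positivity)]
        simp
    _ ≤ _ := by
        rw [← mul_assoc]
        gcongr
        rw [← ENNReal.ofReal_natCast, ← ENNReal.ofReal_mul (by positivity)]
        apply ENNReal.ofReal_le_ofReal
        have h1 : (N : ℝ) ≤ 2 * (1 / d) := by
          rw [hN]; push_cast
          have h3 : (⌊1 / d⌋₊ : ℝ) ≤ 1 / d := Nat.floor_le (by positivity)
          have h4 : 1 ≤ 1 / d := by rw [le_div_iff₀ hd]; linarith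
          linarith
        calc (N : ℝ) * (2 * d) ^ n ≤ 2 * (1 / d) * (2 * d) ^ n := by gcongr
          _ = _ := by
              obtain ⟨m, rfl⟩ : ∃ m, n = m + 1 := ⟨n - 1, by omega⟩
              rw [mul_pow, pow_succ d]; simp; field_simp

lemma sig_compl_sphere {n : ℕ} (hn : 2 ≤ n) : sig n (sphere (0 : Rn n) 1)ᶜ = 0 := by
  rw [sig_apply isClosed_sphere.measurableSet.compl]
  have : Nontrivial (Rn n) := by
    have : Nonempty (Fin n) := ⟨⟨0, by omega⟩⟩
    infer_instance
  refine measure_mono_null (t := {0}) ?_ (measure_singleton _)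
  rintro w ⟨hw, _⟩
  by_contra h
  exact hw (by rw [mem_sphere_zero_iff_norm]; exact norm_Nm h)

lemma sig_le {n : ℕ} (hn : 2 ≤ n) :
    ∃ C : ℝ≥0, sig n ≤ (C : ℝ≥0∞) • μSph n := by
  set V := volume (ball (0 : Rn n) 1) with hV
  have hV0 : V ≠ 0 := (measure_ball_pos _ _ one_pos).ne'
  have hVt : V ≠ ⊤ := measure_ball_lt_top.ne
  set K : ℝ≥0∞ := ENNReal.ofReal (2 * 2 ^ n) * V with hK
  have hK0 : K ≠ 0 := mul_ne_zero (by rw [Ne, ENNReal.ofReal_eq_zero, not_le]; positivity) hV0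
  have hKt : K ≠ ⊤ := ENNReal.mul_ne_top ENNReal.ofReal_ne_top hVt
  have main : K⁻¹ • sig n ≤ μH[(n : ℝ) - 1] := by
    refine Measure.le_hausdorffMeasure _ _ (ENNReal.ofReal (1 / 2)) (by simp) fun s hs => ?_
    by_cases hne : s ⊆ (sphere (0 : Rn n) 1)ᶜ
    · have : sig n s = 0 := measure_mono_null hne (sig_compl_sphere hn)
      simp [this]
    · obtain ⟨θ, hθs, hθ⟩ := not_subset.1 hne
      rw [notMem_compl_iff, mem_sphere_zero_iff_norm] at hθ
      have hst : ediam s ≠ ⊤ := ne_top_of_le_ne_top ENNReal.ofReal_ne_top hs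
      set D := (ediam s).toReal with hD
      have hDs : ediam s = ENNReal.ofReal D := (ENNReal.ofReal_toReal hst).symm
      have hD0 : 0 ≤ D := ENNReal.toReal_nonneg
      have hD1 : D ≤ 1 / 2 := ENNReal.toReal_le_of_le_ofReal (by norm_num) hs
      have hbd : ∀ d, D < d → d ≤ 1 → sig n s ≤ ENNReal.ofReal (2 * 2 ^ n * d ^ (n - 1)) * V := by
        intro d hd hd1
        refine le_trans (measure_mono ?_) (sig_upper hn hθ (hD0.trans_lt hd) hd1)
        intro y hy
        rw [mem_closedBall]
        refine le_trans ?_ hd.le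
        have := edist_le_ediam_of_mem hy hθs
        rw [hDs, edist_dist] at this
        exact (ENNReal.ofReal_le_ofReal_iff hD0).1 this
      have hlim : sig n s ≤ ENNReal.ofReal (2 * 2 ^ n * D ^ (n - 1)) * V := by
        have hc : Continuous fun d : ℝ => ENNReal.ofReal (2 * 2 ^ n * d ^ (n - 1)) * V := by
          refine ENNReal.continuous_mul_const hVt |>.comp ?_
          exact ENNReal.continuous_ofReal.comp (by fun_prop)
        refine ge_of_tendsto ((hc.tendsto D).mono_left (nhdsWithin_le_nhds (s := Ioi D))) ?_
        have : Ioc D 1 ∈ nhdsWithin D (Ioi D) := Ioc_mem_nhdsGT (by linarith)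
        filter_upwards [this] with d hd using hbd d hd.1 hd.2
      rw [Measure.smul_apply, smul_eq_mul, ENNReal.inv_mul_le_iff hK0 hKt]
      refine hlim.trans (le_of_eq ?_)
      rw [hDs, hK, ENNReal.ofReal_rpow_of_nonneg hD0 (by have : (2:ℝ) ≤ n := by exact_mod_cast hn
                                                         linarith),
        ENNReal.ofReal_mul (by positivity)]
      rw [show ((n : ℝ) - 1) = ((n - 1 : ℕ) : ℝ) by rw [Nat.cast_sub (by omega)]; simp, Real.rpow_natCast]
      ring
  refine ⟨K.toNNReal, ?_⟩
  rw [ENNReal.coe_toNNReal hKt]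
  refine Measure.le_iff.2 fun A hA => ?_
  have h1 : sig n A ≤ sig n (A ∩ sphere (0 : Rn n) 1) := by
    calc sig n A ≤ sig n (A ∩ sphere (0 : Rn n) 1) + sig n (A \ sphere (0 : Rn n) 1) :=
          measure_le_inter_add_sdiff _ _ _
      _ = _ := by rw [measure_mono_null (sdiff_subset_compl A _) (sig_compl_sphere hn), add_zero]
  refine h1.trans ?_
  have h2 := main (A ∩ sphere (0 : Rn n) 1)
  rw [Measure.smul_apply, smul_eq_mul, ENNReal.inv_mul_le_iff hK0 hKt] at h2
  rw [Measure.smul_apply, smul_eq_mul, μSph, Measure.restrict_apply hA]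
  exact h2

lemma Nm_smul {n : ℕ} {s : ℝ} (hs : 0 < s) (w : Rn n) : Nm (s • w) = Nm w := by
  unfold Nm
  rw [norm_smul, Real.norm_of_nonneg hs.le, smul_smul]
  congr 1
  field_simp

open scoped Pointwise in
lemma vol_cone {n : ℕ} {A : Set (Rn n)} (hA : MeasurableSet A) {s : ℝ} (hs : 0 < s) :
    volume (Nm ⁻¹' A ∩ ball (0 : Rn n) s) = ENNReal.ofReal (s ^ n) * sig n A := by
  have : Nm ⁻¹' A ∩ ball (0 : Rn n) s = s • (Nm ⁻¹' A ∩ ball (0 : Rn n) 1) := by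
    ext w
    rw [mem_smul_set_iff_inv_smul_mem₀ hs.ne']
    simp only [mem_inter_iff, mem_preimage, mem_ball_zero_iff, Nm_smul (inv_pos.2 hs), norm_smul,
      norm_inv, Real.norm_of_nonneg hs.le]
    rw [inv_mul_lt_iff₀ hs, mul_one]
  rw [this, Measure.addHaar_smul_of_nonneg _ hs.le, sig_apply hA]
  simp

lemma sig_univ_lt_top {n : ℕ} (A : Set (Rn n)) : sig n A ≠ ⊤ := by
  refine ne_top_of_le_ne_top ?_ (measure_mono (subset_univ A))
  rw [sig_apply MeasurableSet.univ]
  exact ne_top_of_le_ne_top measure_ball_lt_top.ne (measure_mono inter_subset_right)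

lemma vol_slab {n : ℕ} {A : Set (Rn n)} (hA : MeasurableSet A) {s₁ s₂ : ℝ} (hs : 0 < s₁)
    (h12 : s₁ < s₂) :
    ENNReal.ofReal (s₂ ^ n - s₁ ^ n) * sig n A ≤ volume {w : Rn n | s₁ ≤ ‖w‖ ∧ ‖w‖ < s₂ ∧ Nm w ∈ A} := by
  calc ENNReal.ofReal (s₂ ^ n - s₁ ^ n) * sig n A
      = volume (Nm ⁻¹' A ∩ ball (0 : Rn n) s₂) - volume (Nm ⁻¹' A ∩ ball (0 : Rn n) s₁) := by
        rw [vol_cone hA hs, vol_cone hA (hs.trans h12), ENNReal.ofReal_sub _ (by positivity),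
          ENNReal.sub_mul (fun _ _ => sig_univ_lt_top A)]
    _ ≤ volume ((Nm ⁻¹' A ∩ ball (0 : Rn n) s₂) \ (Nm ⁻¹' A ∩ ball (0 : Rn n) s₁)) :=
        le_measure_sdiff
    _ ≤ _ := by
        refine measure_mono ?_
        rintro w ⟨⟨h1, h2⟩, h3⟩
        rw [mem_ball_zero_iff] at h2
        refine ⟨?_, h2, h1⟩
        by_contra h
        exact h3 ⟨h1, mem_ball_zero_iff.2 (not_le.1 h)⟩

lemma rpow_lip {a s t : ℝ} (ha : 1 ≤ a) (hs : 0 ≤ s) (hst : s ≤ t) (ht : t ≤ 1) :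
    t ^ a - s ^ a ≤ a * (t - s) := by
  rcases (hs.trans hst).eq_or_lt with h0 | h0
  · have : s = 0 := by linarith
    subst this; subst h0; simp
  have h1 := one_add_mul_self_le_rpow_one_add (s := s / t - 1) (by
    have : 0 ≤ s / t := by positivity
    linarith) ha
  rw [add_sub_cancel, Real.div_rpow hs h0.le, le_div_iff₀ (by positivity)] at h1
  have h2 : t ^ a ≤ t := by
    simpa using Real.rpow_le_rpow_of_exponent_ge h0 ht ha
  have h3 : t ^ a * (1 - s / t) ≤ t * (1 - s / t) := by
    have : s / t ≤ 1 := by rw [div_le_one h0]; exact hst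
    exact mul_le_mul_of_nonneg_right h2 (by linarith)
  have h4 : t * (1 - s / t) = t - s := by field_simp
  have h5 : 0 ≤ a := by linarith
  nlinarith

lemma rpow_lip_abs {a s t : ℝ} (ha : 1 ≤ a) (hs : 0 ≤ s) (ht : 0 ≤ t) (hs1 : s ≤ 1) (ht1 : t ≤ 1) :
    |t ^ a - s ^ a| ≤ a * |t - s| := by
  rcases le_total s t with h | h
  · rw [abs_of_nonneg (sub_nonneg.2 (Real.rpow_le_rpow hs h (by linarith))),
      abs_of_nonneg (sub_nonneg.2 h)]
    exact rpow_lip ha hs h ht1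
  · rw [abs_sub_comm, abs_sub_comm t s,
      abs_of_nonneg (sub_nonneg.2 (Real.rpow_le_rpow ht h (by linarith))),
      abs_of_nonneg (sub_nonneg.2 h)]
    exact rpow_lip ha ht h hs1

lemma root_lip {b v : ℝ} (hb : 0 < b) (hb1 : b ≤ 1) (hv : 0 ≤ v) : |v ^ b - 1| ≤ |v - 1| := by
  rcases le_total v 1 with h | h
  · have h1 : v ≤ v ^ b := by
      rcases hv.eq_or_lt with h0 | h0
      · rw [← h0, Real.zero_rpow hb.ne']
      · simpa using Real.rpow_le_rpow_of_exponent_ge h0 h hb1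
    have h2 : v ^ b ≤ 1 := Real.rpow_le_one hv h hb.le
    rw [abs_of_nonpos (by linarith), abs_of_nonpos (by linarith)]; linarith
  · have h1 : v ^ b ≤ v := by simpa using Real.rpow_le_rpow_of_exponent_le h hb1
    have h2 : 1 ≤ v ^ b := Real.one_le_rpow h hb.le
    rw [abs_of_nonneg (by linarith), abs_of_nonneg (by linarith)]; linarith

lemma omega_lip {n : ℕ} (hn : 2 ≤ n) {a₁ a₂ s s₀ ρ : ℝ} (ha₁ : 1 ≤ a₁) (ha₂ : 1 ≤ a₂) (ha₂n : a₂ ≤ n)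
    (hs : 0 ≤ s) (hs1 : s ≤ 1) (hs0 : 0 ≤ s₀) (hρ : 0 < ρ) (h : s₀ ^ a₁ + ρ ^ a₂ = 1) (hs01 : s₀ ≤ 1)
    (hρ1 : ρ ≤ 1) :
    ρ ^ (n - 1) * |(1 - s ^ a₁) ^ (1 / a₂) - ρ| ≤ a₁ * |s - s₀| := by
  have ha20 : 0 < a₂ := by linarith
  set u := 1 - s ^ a₁ with hu
  have hu0 : 0 ≤ u := by
    have := Real.rpow_le_one hs hs1 (show 0 ≤ a₁ by linarith)
    linarith
  have hρa : 0 < ρ ^ a₂ := by positivity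
  have h1 : u ^ (1 / a₂) = ρ * (u / ρ ^ a₂) ^ (1 / a₂) := by
    rw [Real.div_rpow hu0 hρa.le, ← Real.rpow_mul hρ.le, mul_one_div_cancel ha20.ne', Real.rpow_one]
    field_simp
  have h2 : |u ^ (1 / a₂) - ρ| ≤ ρ * (|u - ρ ^ a₂| / ρ ^ a₂) := by
    rw [h1, show ρ * (u / ρ ^ a₂) ^ (1 / a₂) - ρ = ρ * ((u / ρ ^ a₂) ^ (1 / a₂) - 1) by ring, abs_mul,
      abs_of_pos hρ]
    gcongr
    refine (root_lip (by positivity) (by rw [div_le_one ha20]; exact ha₂) (by positivity)).trans ?_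
    rw [show u / ρ ^ a₂ - 1 = (u - ρ ^ a₂) / ρ ^ a₂ by field_simp, abs_div, abs_of_pos hρa]
  have h3 : |u - ρ ^ a₂| ≤ a₁ * |s - s₀| := by
    rw [show u - ρ ^ a₂ = -(s ^ a₁ - s₀ ^ a₁) by rw [hu]; linarith, abs_neg]
    exact rpow_lip_abs ha₁ hs0 hs hs01 hs1
  have h4 : ρ ^ n ≤ ρ ^ a₂ := by
    rw [← Real.rpow_natCast]
    exact Real.rpow_le_rpow_of_exponent_ge hρ hρ1 ha₂n
  have h5 : ρ ^ (n - 1) * ρ = ρ ^ n := by rw [← pow_succ]; congr 1; omega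
  calc ρ ^ (n - 1) * |u ^ (1 / a₂) - ρ| ≤ ρ ^ (n - 1) * (ρ * (|u - ρ ^ a₂| / ρ ^ a₂)) := by gcongr
    _ = ρ ^ n / ρ ^ a₂ * |u - ρ ^ a₂| := by rw [← h5]; ring
    _ ≤ 1 * |u - ρ ^ a₂| := by
        gcongr
        rw [div_le_one hρa]; exact h4
    _ ≤ _ := by rw [one_mul]; exact h3

lemma vol_Y {n : ℕ} (hn : 2 ≤ n) {a₁ a₂ : ℝ} (ha₁ : 1 ≤ a₁) (ha₂ : 1 ≤ a₂) (ha₂n : a₂ ≤ n) :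
    ∃ c : ℝ, 0 < c ∧ ∀ (y₀ : Rn n) (ρ r : ℝ), 0 < ρ → ‖y₀‖ ^ a₁ + ρ ^ a₂ = 1 → 0 < r → r ≤ 1 / 2 →
      ENNReal.ofReal (c * r ^ n * ρ ^ (n - 1)) * volume (ball (0 : Rn n) 1) ≤
        volume {y : Rn n | ‖y - y₀‖ ≤ r ∧ ‖y‖ < 1 ∧ |omegaW a₁ a₂ y - ρ| ≤ r / 2} := by
  have ha₁0 : 0 < a₁ := by linarith
  set c₁ : ℝ := 1 / (2 * a₁) * (1 / 2 ^ (n - 1)) * (1 / 2 ^ (n - 1)) * (1 / 8 ^ n) with hc₁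
  set c₂ : ℝ := (1 / (2 * a₁)) ^ n * ((1 / 2) ^ (n - 1)) ^ (n - 1) with hc₂
  have hc₁0 : 0 < c₁ := by positivity
  have hc₂0 : 0 < c₂ := by positivity
  refine ⟨min c₁ c₂, lt_min hc₁0 hc₂0, ?_⟩
  intro y₀ ρ r hρ h hr hr2
  have hρa : 0 < ρ ^ a₂ := by positivity
  have hs₀1 : ‖y₀‖ < 1 := by
    by_contra hcon
    have := Real.one_le_rpow (not_lt.1 hcon) ha₁0.le
    linarith
  have hρ1 : ρ ≤ 1 := by
    by_contra hcon
    have := Real.one_lt_rpow (not_le.1 hcon) (show 0 < a₂ by linarith)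
    have := Real.rpow_nonneg (norm_nonneg y₀) a₁
    linarith
  set k := ρ ^ (n - 1) with hk
  have hk0 : 0 < k := by positivity
  have hk1 : k ≤ 1 := pow_le_one₀ hρ.le hρ1
  set ε := k * r / (2 * a₁) with hε
  have hε0 : 0 < ε := by positivity
  have hεr : ε ≤ r / 2 := by
    rw [hε, div_le_iff₀ (by positivity)]
    nlinarith [mul_le_mul_of_nonneg_right hk1 hr.le]
  have hom : ∀ y : Rn n, ‖y‖ < 1 → |‖y‖ - ‖y₀‖| ≤ ε → |omegaW a₁ a₂ y - ρ| ≤ r / 2 := by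
    intro y hy1 hy
    have := omega_lip hn ha₁ ha₂ ha₂n (norm_nonneg y) hy1.le (norm_nonneg y₀) hρ h hs₀1.le hρ1
    have h2 : k * |omegaW a₁ a₂ y - ρ| ≤ k * (r / 2) := by
      calc k * |omegaW a₁ a₂ y - ρ| ≤ a₁ * |‖y‖ - ‖y₀‖| := this
        _ ≤ a₁ * ε := by gcongr
        _ = k * (r / 2) := by rw [hε]; field_simp
    exact le_of_mul_le_mul_left h2 hk0
  rcases le_or_gt (1 / 2) ‖y₀‖ with hcase | hcase
  · set e := Nm y₀ with he
    have hy0 : y₀ ≠ 0 := by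
      intro h0; rw [h0, norm_zero] at hcase; norm_num at hcase
    have hen : ‖e‖ = 1 := norm_Nm hy0
    have hsub : {w : Rn n | ‖y₀‖ - ε ≤ ‖w‖ ∧ ‖w‖ < ‖y₀‖ ∧ Nm w ∈ closedBall e (r / 2)} ⊆
        {y : Rn n | ‖y - y₀‖ ≤ r ∧ ‖y‖ < 1 ∧ |omegaW a₁ a₂ y - ρ| ≤ r / 2} := by
      rintro w ⟨h1, h2, h3⟩
      rw [mem_closedBall, dist_eq_norm] at h3
      have h4 : |‖w‖ - ‖y₀‖| ≤ ε := by rw [abs_le]; constructor <;> linarith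
      refine ⟨?_, h2.trans hs₀1, hom w (h2.trans hs₀1) h4⟩
      calc ‖w - y₀‖ = ‖‖w‖ • (Nm w - e) + (‖w‖ - ‖y₀‖) • e‖ := by
            conv_lhs => rw [← norm_smul_Nm w, ← norm_smul_Nm y₀]
            congr 1; module
        _ ≤ ‖‖w‖ • (Nm w - e)‖ + ‖(‖w‖ - ‖y₀‖) • e‖ := norm_add_le _ _
        _ = ‖w‖ * ‖Nm w - e‖ + |‖w‖ - ‖y₀‖| := by
            rw [norm_smul, norm_smul, norm_norm, hen, mul_one, Real.norm_eq_abs]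
        _ ≤ r := by nlinarith [norm_nonneg (Nm w - e), norm_nonneg w]
    refine le_trans ?_ (measure_mono hsub)
    refine le_trans ?_ (vol_slab isClosed_closedBall.measurableSet (by linarith) (by linarith))
    refine le_trans ?_ (mul_le_mul_right (sig_lower hn hen (show 0 < r / 2 by positivity) (by linarith)) _)
    rw [← mul_assoc]
    have hpow : ε * (1 / 2 ^ (n - 1)) ≤ ‖y₀‖ ^ n - (‖y₀‖ - ε) ^ n := by
      have h1 : ‖y₀‖ ^ n = ‖y₀‖ ^ (n - 1) * ‖y₀‖ := by rw [← pow_succ]; congr 1; omega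
      have h2 : (‖y₀‖ - ε) ^ n = (‖y₀‖ - ε) ^ (n - 1) * (‖y₀‖ - ε) := by
        rw [← pow_succ]; congr 1; omega
      have h3 : (‖y₀‖ - ε) ^ (n - 1) ≤ ‖y₀‖ ^ (n - 1) := by
        apply pow_le_pow_left₀ <;> linarith
      have h4 : 1 / 2 ^ (n - 1) ≤ ‖y₀‖ ^ (n - 1) := by
        rw [← one_div_pow]
        apply pow_le_pow_left₀ <;> linarith
      rw [h1, h2]
      have h5 : (‖y₀‖ - ε) ^ (n - 1) * (‖y₀‖ - ε) ≤ ‖y₀‖ ^ (n - 1) * (‖y₀‖ - ε) :=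
        mul_le_mul_of_nonneg_right h3 (by linarith)
      nlinarith
    rw [← ENNReal.ofReal_mul (le_trans (by positivity) hpow)]
    refine mul_le_mul' (ENNReal.ofReal_le_ofReal ?_) le_rfl
    calc min c₁ c₂ * r ^ n * k ≤ c₁ * r ^ n * k := by
          gcongr; exact min_le_left _ _
      _ = (ε * (1 / 2 ^ (n - 1))) * ((r / 2) ^ (n - 1) / 8 ^ n) := by
          have h1 : r ^ n = r ^ (n - 1) * r := by rw [← pow_succ]; congr 1; omega
          rw [hc₁, hε, h1, div_pow]; field_simp
      _ ≤ _ := by gcongr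
  · have hsub : closedBall y₀ ε ⊆
        {y : Rn n | ‖y - y₀‖ ≤ r ∧ ‖y‖ < 1 ∧ |omegaW a₁ a₂ y - ρ| ≤ r / 2} := by
      intro y hy
      rw [mem_closedBall, dist_eq_norm] at hy
      have h1 : |‖y‖ - ‖y₀‖| ≤ ε := (abs_norm_sub_norm_le y y₀).trans hy
      have h2 : ‖y‖ < 1 := by have := (abs_le.1 h1).2; linarith
      exact ⟨by linarith, h2, hom y h2 h1⟩
    refine le_trans ?_ (measure_mono hsub)
    rw [vol_closedBall _ hε0]
    gcongr
    have hρ2 : 1 / 2 ≤ ρ := by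
      have h1 : ρ ^ a₂ ≤ ρ := by simpa using Real.rpow_le_rpow_of_exponent_ge hρ hρ1 ha₂
      have h2 : ‖y₀‖ ^ a₁ ≤ 1 / 2 := by
        rcases (norm_nonneg y₀).eq_or_lt with h0 | h0
        · rw [← h0, Real.zero_rpow ha₁0.ne']; norm_num
        · have := Real.rpow_le_rpow_of_exponent_ge h0 hs₀1.le ha₁
          rw [Real.rpow_one] at this; linarith
      linarith
    have hk2 : (1 / 2) ^ (n - 1) ≤ k := pow_le_pow_left₀ (by norm_num) hρ2 _
    have hkn : ((1 / 2) ^ (n - 1)) ^ (n - 1) * k ≤ k ^ n := by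
      have : k ^ n = k ^ (n - 1) * k := by rw [← pow_succ]; congr 1; omega
      rw [this]
      gcongr
    calc min c₁ c₂ * r ^ n * k ≤ c₂ * r ^ n * k := by
          gcongr; exact min_le_right _ _
      _ = (1 / (2 * a₁)) ^ n * r ^ n * (((1 / 2) ^ (n - 1)) ^ (n - 1) * k) := by rw [hc₂]; ring
      _ ≤ (1 / (2 * a₁)) ^ n * r ^ n * k ^ n := by gcongr
      _ = ε ^ n := by rw [← mul_pow, ← mul_pow, hε]; congr 1; ring

/-- The comparison measure on the surface. -/
def nuS (n : ℕ) (a₁ a₂ : ℝ) : Measure (Rn n × Rn n) :=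
  Measure.map (fun p : Rn n × Rn n => (p.1, omegaW a₁ a₂ p.1 • Nm p.2))
    ((volume.restrict (ball (0 : Rn n) 1)).prod (volume.restrict (ball (0 : Rn n) 1)))

lemma measurable_omegaW {n : ℕ} (a₁ a₂ : ℝ) : Measurable (fun y : Rn n => omegaW a₁ a₂ y) := by
  unfold omegaW; fun_prop

lemma measurable_par {n : ℕ} (a₁ a₂ : ℝ) :
    Measurable (fun p : Rn n × Rn n => (p.1, omegaW a₁ a₂ p.1 • Nm p.2)) :=
  measurable_fst.prodMk (((measurable_omegaW a₁ a₂).comp measurable_fst).smul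
    (measurable_Nm.comp measurable_snd))

instance finite_restrict_ball (n : ℕ) : IsFiniteMeasure (volume.restrict (ball (0 : Rn n) 1)) :=
  ⟨by rw [Measure.restrict_apply_univ]; exact measure_ball_lt_top⟩

instance finite_nuS (n : ℕ) (a₁ a₂ : ℝ) : IsFiniteMeasure (nuS n a₁ a₂) := by
  unfold nuS; infer_instance

lemma nuS_ball {n : ℕ} (hn : 2 ≤ n) {a₁ a₂ : ℝ} (ha₁ : 1 ≤ a₁) (ha₂ : 1 ≤ a₂) (ha₂n : a₂ ≤ n) :
    ∃ c : ℝ, 0 < c ∧ ∀ p ∈ S2 n a₁ a₂ ∩ {p | p.2 ≠ 0}, ∃ r0 > 0, ∀ r, 0 < r → r ≤ r0 →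
      ENNReal.ofReal (c * r ^ (2 * (n : ℝ) - 1)) ≤ nuS n a₁ a₂ (closedBall p r) := by
  obtain ⟨c, hc, hY⟩ := vol_Y hn ha₁ ha₂ ha₂n
  set V := volume (ball (0 : Rn n) 1) with hV
  have hV0 : V ≠ 0 := (measure_ball_pos _ _ one_pos).ne'
  have hVt : V ≠ ⊤ := measure_ball_lt_top.ne
  obtain ⟨v, hVr, hVV⟩ : ∃ v : ℝ, 0 < v ∧ V = ENNReal.ofReal v :=
    ⟨V.toReal, ENNReal.toReal_pos hV0 hVt, (ENNReal.ofReal_toReal hVt).symm⟩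
  refine ⟨c / (2 ^ (n - 1) * 8 ^ n) * v ^ 2, by positivity, ?_⟩
  rintro ⟨y₀, z₀⟩ ⟨hp, hz⟩
  change ‖y₀‖ ^ a₁ + ‖z₀‖ ^ a₂ = 1 at hp
  change z₀ ≠ 0 at hz
  have hρ : 0 < ‖z₀‖ := norm_pos_iff.2 hz
  refine ⟨min (1 / 2) (2 * ‖z₀‖), by positivity, ?_⟩
  intro r hr hr0
  have hr1 : r ≤ 1 / 2 := hr0.trans (min_le_left _ _)
  have hr2 : r ≤ 2 * ‖z₀‖ := hr0.trans (min_le_right _ _)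
  have hYr := hY y₀ ‖z₀‖ r hρ hp hr hr1
  set Y := {y : Rn n | ‖y - y₀‖ ≤ r ∧ ‖y‖ < 1 ∧ |omegaW a₁ a₂ y - ‖z₀‖| ≤ r / 2} with hYdef
  have hS := sig_lower hn (norm_Nm hz) (show 0 < r / (2 * ‖z₀‖) by positivity)
    (by rw [div_le_one (by positivity)]; exact hr2)
  rw [← hV] at hS
  set B := closedBall (Nm z₀) (r / (2 * ‖z₀‖)) with hB
  have hBm : MeasurableSet B := isClosed_closedBall.measurableSet
  rw [nuS, Measure.map_apply (measurable_par a₁ a₂) isClosed_closedBall.measurableSet]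
  have hsub : Y ×ˢ (Nm ⁻¹' B) ⊆
      (fun p : Rn n × Rn n => (p.1, omegaW a₁ a₂ p.1 • Nm p.2)) ⁻¹' closedBall (y₀, z₀) r := by
    rintro ⟨y, w⟩ ⟨⟨h1, h2, h3⟩, h4⟩
    change Nm w ∈ B at h4
    rw [hB, mem_closedBall, dist_eq_norm] at h4
    rw [mem_preimage, mem_closedBall, Prod.dist_eq]
    refine max_le (by rw [dist_eq_norm]; exact h1) ?_
    change dist (omegaW a₁ a₂ y • Nm w) z₀ ≤ r
    rw [dist_eq_norm]
    calc ‖omegaW a₁ a₂ y • Nm w - z₀‖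
        = ‖(omegaW a₁ a₂ y - ‖z₀‖) • Nm w + ‖z₀‖ • (Nm w - Nm z₀)‖ := by
          conv_lhs => rw [← norm_smul_Nm z₀]
          congr 1; module
      _ ≤ ‖(omegaW a₁ a₂ y - ‖z₀‖) • Nm w‖ + ‖‖z₀‖ • (Nm w - Nm z₀)‖ := norm_add_le _ _
      _ = |omegaW a₁ a₂ y - ‖z₀‖| * ‖Nm w‖ + ‖z₀‖ * ‖Nm w - Nm z₀‖ := by
          rw [norm_smul, norm_smul, norm_norm, Real.norm_eq_abs]
      _ ≤ r / 2 * 1 + ‖z₀‖ * (r / (2 * ‖z₀‖)) := by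
          gcongr
          exact norm_Nm_le w
      _ = r := by field_simp; ring
  refine le_trans ?_ (measure_mono hsub)
  rw [Measure.prod_prod, Measure.restrict_apply' measurableSet_ball,
    Measure.restrict_apply' measurableSet_ball, ← sig_apply hBm]
  have hYb : Y ∩ ball (0 : Rn n) 1 = Y := by
    refine inter_eq_left.2 ?_
    rintro y ⟨_, h2, _⟩
    exact mem_ball_zero_iff.2 h2
  rw [hYb]
  refine le_trans (le_of_eq ?_) (mul_le_mul' hYr hS)
  rw [hVV, ← ENNReal.ofReal_mul (by positivity), ← ENNReal.ofReal_mul (by positivity),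
    ← ENNReal.ofReal_mul (by positivity)]
  congr 1
  have hrp : r ^ (2 * (n : ℝ) - 1) = r ^ n * r ^ (n - 1) := by
    rw [← pow_add, ← Real.rpow_natCast]
    congr 1
    push_cast [Nat.cast_sub (show 1 ≤ n by omega)]
    ring
  rw [hrp, div_pow, mul_pow]
  field_simp

lemma hausdorff_le_nuS {n : ℕ} (hn : 2 ≤ n) {a₁ a₂ : ℝ} (ha₁ : 1 ≤ a₁) (ha₂ : 1 ≤ a₂)
    (ha₂n : a₂ ≤ n) :
    ∃ C : ℝ≥0, (μH[(2 * (n : ℝ) - 1)]).restrict (S2 n a₁ a₂) ≤ (C : ℝ≥0∞) • nuS n a₁ a₂ := by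
  obtain ⟨c, hc, hb⟩ := nuS_ball hn ha₁ ha₂ ha₂n
  have hn2 : (2 : ℝ) ≤ n := by exact_mod_cast hn
  have hs : 0 < 2 * (n : ℝ) - 1 := by linarith
  refine ⟨(10 ^ (2 * (n : ℝ) - 1) / c).toNNReal, ?_⟩
  have hnull : μH[(2 * (n : ℝ) - 1)] {p : Rn n × Rn n | p.2 = 0} = 0 := by
    have hiso : Isometry (fun y : Rn n => (y, (0 : Rn n))) := by
      intro a b
      simp [Prod.edist_eq]
    have himg : {p : Rn n × Rn n | p.2 = 0} = (fun y : Rn n => (y, (0 : Rn n))) '' univ := by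
      ext ⟨y, z⟩
      simp [eq_comm]
    rw [himg, hiso.hausdorffMeasure_image (Or.inl hs.le)]
    have := Real.hausdorffMeasure_of_finrank_lt (E := Rn n) (d := 2 * (n : ℝ) - 1)
      (by simp; linarith)
    rw [this]; simp
  refine Measure.le_iff.2 fun A hA => ?_
  rw [Measure.restrict_apply hA, Measure.smul_apply, smul_eq_mul]
  set G := A ∩ (S2 n a₁ a₂ ∩ {p | p.2 ≠ 0}) with hG
  have h1 : A ∩ S2 n a₁ a₂ ⊆ G ∪ {p : Rn n × Rn n | p.2 = 0} := by
    rintro p ⟨h1, h2⟩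
    by_cases h : p.2 = 0
    · exact Or.inr h
    · exact Or.inl ⟨h1, h2, h⟩
  calc μH[(2 * (n : ℝ) - 1)] (A ∩ S2 n a₁ a₂)
      ≤ μH[(2 * (n : ℝ) - 1)] G + μH[(2 * (n : ℝ) - 1)] {p : Rn n × Rn n | p.2 = 0} :=
        (measure_mono h1).trans (measure_union_le _ _)
    _ = μH[(2 * (n : ℝ) - 1)] G := by rw [hnull, add_zero]
    _ ≤ ENNReal.ofReal (10 ^ (2 * (n : ℝ) - 1) / c) * nuS n a₁ a₂ G :=
        hausdorff_le_of_ball _ _ hs c hc G fun p hp => hb p hp.2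
    _ ≤ _ := mul_le_mul' le_rfl (measure_mono inter_subset_left)

lemma omegaW_pos {n : ℕ} {a₁ a₂ : ℝ} (ha₁ : 1 ≤ a₁) {y : Rn n} (hy : ‖y‖ < 1) :
    0 < omegaW a₁ a₂ y := by
  unfold omegaW
  apply Real.rpow_pos_of_pos
  have := Real.rpow_lt_one (norm_nonneg y) hy (show 0 < a₁ by linarith)
  linarith

lemma ball_avg {n : ℕ} {f : Rn n → ℝ} (hf : Measurable f) (hf0 : ∀ y, 0 ≤ f y)
    (x : Rn n) {t : ℝ} (ht : 0 < t) :
    ∫⁻ y in ball (0 : Rn n) 1, ENNReal.ofReal (f (x - t • y)) ≤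
      volume (ball (0 : Rn n) 1) * HLMax n f x := by
  set V := volume (ball (0 : Rn n) 1) with hV
  have hV0 : V ≠ 0 := (measure_ball_pos _ _ one_pos).ne'
  have hVt : V ≠ ⊤ := measure_ball_lt_top.ne
  have hT : ENNReal.ofReal (t ^ n) ≠ 0 := by
    rw [Ne, ENNReal.ofReal_eq_zero, not_le]; positivity
  have hI : ∫⁻ u in ball x t, ENNReal.ofReal |f u| =
      ENNReal.ofReal (t ^ n) * ∫⁻ y in ball (0 : Rn n) 1, ENNReal.ofReal (f (x - t • y)) := by
    have hm : Measurable ((ball x t).indicator fun u => ENNReal.ofReal (f u)) :=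
      (hf.ennreal_ofReal).indicator measurableSet_ball
    simp_rw [abs_of_nonneg (hf0 _)]
    rw [← lintegral_indicator measurableSet_ball, ← lintegral_indicator measurableSet_ball]
    rw [← lintegral_sub_left_eq_self _ x]
    have hm2 : Measurable fun z : Rn n => (ball x t).indicator (fun u => ENNReal.ofReal (f u)) (x - z) :=
      hm.comp (by fun_prop)
    have hmap := Measure.map_addHaar_smul (volume : Measure (Rn n)) ht.ne'
    have hvol : (volume : Measure (Rn n)) =
        ENNReal.ofReal (t ^ n) • Measure.map (fun y : Rn n => t • y) volume := by
      rw [hmap, smul_smul, ← ENNReal.ofReal_mul (by positivity)]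
      have : t ^ n * |(t ^ Module.finrank ℝ (Rn n))⁻¹| = 1 := by
        rw [abs_of_pos (by positivity)]
        simp only [finrank_euclideanSpace, Fintype.card_fin]
        field_simp
      rw [this]; simp
    conv_lhs => rw [hvol]
    rw [lintegral_smul_measure, lintegral_map hm2 (by fun_prop), smul_eq_mul]
    congr 1
    refine lintegral_congr fun y => ?_
    by_cases hy : y ∈ ball (0 : Rn n) 1
    · rw [indicator_of_mem hy, indicator_of_mem]
      rw [mem_ball_zero_iff] at hy
      rw [mem_ball, dist_eq_norm, sub_sub_cancel_left, norm_neg, norm_smul, Real.norm_of_nonneg ht.le]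
      nlinarith
    · rw [indicator_of_notMem hy, indicator_of_notMem]
      rw [mem_ball_zero_iff] at hy
      rw [mem_ball, dist_eq_norm, sub_sub_cancel_left, norm_neg, norm_smul, Real.norm_of_nonneg ht.le]
      nlinarith
  have hle : (∫⁻ u in ball x t, ENNReal.ofReal |f u|) / volume (ball x t) ≤ HLMax n f x :=
    le_iSup₂ (f := fun r (_ : r ∈ Ioi (0 : ℝ)) =>
      (∫⁻ y in ball x r, ENNReal.ofReal |f y|) / volume (ball x r)) t ht
  rw [hI, vol_ball x ht, ENNReal.mul_div_mul_left _ _ hT ENNReal.ofReal_ne_top,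
    ENNReal.div_le_iff_le_mul (Or.inl hV0) (Or.inl hVt)] at hle
  rwa [mul_comm]

lemma half_main {n : ℕ} (hn : 2 ≤ n) {a₁ a₂ : ℝ} (ha₁ : 1 ≤ a₁) (ha₂ : 1 ≤ a₂)
    (ha₂n : a₂ ≤ n) :
    ∃ C : ℝ≥0, ∀ f g : Rn n → ℝ,
      Measurable f → Measurable g → (∀ y, 0 ≤ f y) → (∀ y, 0 ≤ g y) →
      ∀ x : Rn n, ∀ t₁ > 0, ∀ t₂ > 0,
        biAvgE n a₁ a₂ f g t₁ t₂ x ≤ (C : ℝ≥0∞) * HLMax n f x * sphMax n g x := by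
  obtain ⟨C₁, hC₁⟩ := sig_le hn
  obtain ⟨C₂, hC₂⟩ := hausdorff_le_nuS hn ha₁ ha₂ ha₂n
  set V := volume (ball (0 : Rn n) 1) with hV
  have hVt : V ≠ ⊤ := measure_ball_lt_top.ne
  set H := μH[(2 * (n : ℝ) - 1)] (S2 n a₁ a₂) with hH
  by_cases hH0 : H = 0
  · refine ⟨0, fun f g _ _ _ _ x t₁ _ t₂ _ => ?_⟩
    have : μS2 n a₁ a₂ = 0 := by
      rw [μS2, Measure.restrict_eq_zero.2 hH0, smul_zero]
    rw [biAvgE, this]; simp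
  have hHi : H⁻¹ ≠ ⊤ := ENNReal.inv_ne_top.2 hH0
  refine ⟨(H⁻¹ * (C₂ * (C₁ * V))).toNNReal, ?_⟩
  intro f g hf hg hf0 hg0 x t₁ ht₁ t₂ ht₂
  rw [ENNReal.coe_toNNReal (by finiteness)]
  have hFm : Measurable fun p : Rn n × Rn n =>
      ENNReal.ofReal (f (x - t₁ • p.1)) * ENNReal.ofReal (g (x - t₂ • p.2)) := by
    have h1 : Measurable fun p : Rn n × Rn n => ENNReal.ofReal (f (x - t₁ • p.1)) :=
      (hf.comp (by fun_prop)).ennreal_ofReal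
    have h2 : Measurable fun p : Rn n × Rn n => ENNReal.ofReal (g (x - t₂ • p.2)) :=
      (hg.comp (by fun_prop)).ennreal_ofReal
    exact h1.mul h2
  have hinner : ∀ y ∈ ball (0 : Rn n) 1,
      ∫⁻ w in ball (0 : Rn n) 1, ENNReal.ofReal (g (x - t₂ • (omegaW a₁ a₂ y • Nm w))) ≤
        C₁ * sphMax n g x := by
    intro y hy
    have hω := omegaW_pos (a₂ := a₂) ha₁ (mem_ball_zero_iff.1 hy)
    have hgm : Measurable fun θ : Rn n => ENNReal.ofReal (g (x - (t₂ * omegaW a₁ a₂ y) • θ)) :=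
      (hg.comp (by fun_prop)).ennreal_ofReal
    calc ∫⁻ w in ball (0 : Rn n) 1, ENNReal.ofReal (g (x - t₂ • (omegaW a₁ a₂ y • Nm w)))
        = ∫⁻ θ, ENNReal.ofReal (g (x - (t₂ * omegaW a₁ a₂ y) • θ)) ∂(sig n) := by
          rw [sig, lintegral_map hgm measurable_Nm]
          simp_rw [smul_smul]
      _ ≤ ∫⁻ θ, ENNReal.ofReal (g (x - (t₂ * omegaW a₁ a₂ y) • θ)) ∂((C₁ : ℝ≥0∞) • μSph n) :=
          lintegral_mono' hC₁ le_rfl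
      _ = C₁ * sphAvgE n g x (t₂ * omegaW a₁ a₂ y) := by
          rw [lintegral_smul_measure, smul_eq_mul, sphAvgE]
      _ ≤ C₁ * sphMax n g x := by
          gcongr
          exact le_iSup₂ (f := fun t (_ : t ∈ Ioi (0 : ℝ)) => sphAvgE n g x t)
            (t₂ * omegaW a₁ a₂ y) (mul_pos ht₂ hω)
  have hν : ∫⁻ p, ENNReal.ofReal (f (x - t₁ • p.1)) * ENNReal.ofReal (g (x - t₂ • p.2))
      ∂(nuS n a₁ a₂) ≤ V * HLMax n f x * (C₁ * sphMax n g x) := by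
    have hcomp : Measurable fun a : Rn n × Rn n => ENNReal.ofReal (f (x - t₁ • a.1)) *
        ENNReal.ofReal (g (x - t₂ • (omegaW a₁ a₂ a.1 • Nm a.2))) :=
      hFm.comp (measurable_par a₁ a₂)
    rw [nuS, lintegral_map hFm (measurable_par a₁ a₂), lintegral_prod _ hcomp.aemeasurable]
    have hfm : Measurable fun y : Rn n => ENNReal.ofReal (f (x - t₁ • y)) :=
      (hf.comp (by fun_prop)).ennreal_ofReal
    calc _ ≤ ∫⁻ y in ball (0 : Rn n) 1, ENNReal.ofReal (f (x - t₁ • y)) * (C₁ * sphMax n g x) := by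
          refine setLIntegral_mono' measurableSet_ball fun y hy => ?_
          dsimp only
          rw [lintegral_const_mul]
          · exact mul_le_mul' le_rfl (hinner y hy)
          · refine Measurable.ennreal_ofReal (hg.comp ?_)
            have := measurable_Nm (n := n)
            fun_prop
      _ = (∫⁻ y in ball (0 : Rn n) 1, ENNReal.ofReal (f (x - t₁ • y))) * (C₁ * sphMax n g x) :=
          lintegral_mul_const _ hfm
      _ ≤ _ := mul_le_mul' (ball_avg hf hf0 x ht₁) le_rfl
  calc biAvgE n a₁ a₂ f g t₁ t₂ x
      = H⁻¹ * ∫⁻ p, ENNReal.ofReal (f (x - t₁ • p.1)) * ENNReal.ofReal (g (x - t₂ • p.2))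
          ∂((μH[(2 * (n : ℝ) - 1)]).restrict (S2 n a₁ a₂)) := by
        rw [biAvgE, μS2, lintegral_smul_measure, smul_eq_mul]
    _ ≤ H⁻¹ * ∫⁻ p, ENNReal.ofReal (f (x - t₁ • p.1)) * ENNReal.ofReal (g (x - t₂ • p.2))
          ∂((C₂ : ℝ≥0∞) • nuS n a₁ a₂) := by
        gcongr
    _ ≤ H⁻¹ * (C₂ * (V * HLMax n f x * (C₁ * sphMax n g x))) := by
        rw [lintegral_smul_measure, smul_eq_mul]
        gcongr
    _ = _ := by ring

lemma biAvgE_swap {n : ℕ} (a₁ a₂ : ℝ) {f g : Rn n → ℝ} (x : Rn n) (t₁ t₂ : ℝ) :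
    biAvgE n a₁ a₂ f g t₁ t₂ x = biAvgE n a₂ a₁ g f t₂ t₁ x := by
  let e : (Rn n × Rn n) ≃ᵢ (Rn n × Rn n) :=
    { toEquiv := Equiv.prodComm _ _
      isometry_toFun := by
        rintro ⟨a, b⟩ ⟨c, d⟩
        simp [Prod.edist_eq, max_comm] }
  have hpre : e ⁻¹' (S2 n a₂ a₁) = S2 n a₁ a₂ := by
    ext ⟨y, z⟩
    change ‖z‖ ^ a₂ + ‖y‖ ^ a₁ = 1 ↔ ‖y‖ ^ a₁ + ‖z‖ ^ a₂ = 1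
    rw [add_comm]
  have hmeas : μH[(2 * (n : ℝ) - 1)] (S2 n a₁ a₂) = μH[(2 * (n : ℝ) - 1)] (S2 n a₂ a₁) := by
    rw [← hpre, e.hausdorffMeasure_preimage]
  have hme : MeasurableEmbedding e := e.toHomeomorph.measurableEmbedding
  have hmp := (e.measurePreserving_hausdorffMeasure (2 * (n : ℝ) - 1)).restrict_preimage_emb hme
    (S2 n a₂ a₁)
  rw [hpre] at hmp
  rw [biAvgE, biAvgE, μS2, μS2, lintegral_smul_measure, lintegral_smul_measure, hmeas,
    ← hmp.lintegral_comp_emb hme]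
  congr 1
  refine lintegral_congr fun p => ?_
  rw [mul_comm]
  rfl

/-- In the non-degenerate range `a₁, a₂ ≤ n`, the bilinear maximal function is
pointwise dominated by products of the Hardy–Littlewood and spherical maximal functions. -/
theorem bilinear_maximal_pointwise_domination
    (n : ℕ) (hn : 2 ≤ n) (a₁ a₂ : ℝ) (ha₁ : 1 ≤ a₁) (ha₂ : 1 ≤ a₂)
    (ha₁n : a₁ ≤ n) (ha₂n : a₂ ≤ n) :
    ∃ C : ℝ≥0, ∀ f g : Rn n → ℝ,
      Measurable f → Measurable g → (∀ y, 0 ≤ f y) → (∀ y, 0 ≤ g y) →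
      ∀ x : Rn n,
        biMaxE n a₁ a₂ f g x ≤ (C : ℝ≥0∞) * HLMax n f x * sphMax n g x ∧
        biMaxE n a₁ a₂ f g x ≤ (C : ℝ≥0∞) * sphMax n f x * HLMax n g x := by

  obtain ⟨C₁, h₁⟩ := half_main hn ha₁ ha₂ ha₂n
  obtain ⟨C₂, h₂⟩ := half_main hn ha₂ ha₁ ha₁n
  refine ⟨max C₁ C₂, fun f g hf hg hf0 hg0 x => ⟨?_, ?_⟩⟩
  · refine iSup₂_le fun t₁ ht₁ => iSup₂_le fun t₂ ht₂ => ?_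
    refine (h₁ f g hf hg hf0 hg0 x t₁ ht₁ t₂ ht₂).trans ?_
    gcongr
    exact le_max_left _ _
  · refine iSup₂_le fun t₁ ht₁ => iSup₂_le fun t₂ ht₂ => ?_
    rw [biAvgE_swap]
    refine (h₂ g f hg hf hg0 hf0 x t₂ ht₂ t₁ ht₁).trans ?_
    rw [mul_right_comm]
    gcongr
    exact le_max_right _ _
end
end

section
/- Let n ≥ 2 and 𝐚 = (a₁,a₂) ∈ [1,∞)² with a₁ ≤ n < a₂, and set ω_𝐚(y) = (1−|y|^{a₁})^{1/a₂}. For k ≥ 1 let χ_k^{a₁}(y) be the indicator of {y : 2^{−k} ≤ 1−|y|^{a₁} ≤ 2^{1−k}}, define 𝒜^k_{(t₁,t₂)}(f,g)(x) = ∫ f(x−t₁y) χ_k^{a₁}(y) ω_𝐚(y)^{n−a₂} 𝔄g(x, t₂ ω_𝐚(y)) dy, and ℳ^k(f,g)(x) = sup_{t₁,t₂>0} |𝒜^k_{(t₁,t₂)}(f,g)(x)|. Then there is a constant C such that for all nonnegative measurable f, g and all x ∈ ℝⁿ and all k ≥ 1: ℳ^k(f,g)(x) ≤ C 2^{k(a₂−n)/a₂}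 Mf(x) ℳ_s g(x) and ℳ^k(f,g)(x) ≤ C 2^{−kn/a₂} ℳ_s f(x) Mg(x). -/
open MeasureTheory Metric Set
open scoped ENNReal NNReal

noncomputable section

/-- The dyadic piece `𝒜^k_{(t₁,t₂)}(f,g)(x)`, where the `y`-integration is
restricted to `{y : 2^{-k} ≤ 1 - |y|^{a₁} ≤ 2^{1-k}}`. -/
def dyadicAvg (n : ℕ) (a₁ a₂ : ℝ) (k : ℕ) (f g : Rn n → ℝ) (t₁ t₂ : ℝ) (x : Rn n) : ℝ≥0∞ :=
  ∫⁻ y in {y : Rn n | 2 ^ (-(k : ℝ)) ≤ 1 - ‖y‖ ^ a₁ ∧ 1 - ‖y‖ ^ a₁ ≤ 2 ^ (1 - (k : ℝ))},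
    ENNReal.ofReal (f (x - t₁ • y)) *
      ENNReal.ofReal ((omegaW a₁ a₂ y) ^ ((n : ℝ) - a₂)) *
      sphAvgE n g x (t₂ * omegaW a₁ a₂ y)

/-- The dyadic maximal operator `ℳ^k(f,g)(x) = sup_{t₁,t₂>0} |𝒜^k_{(t₁,t₂)}(f,g)(x)|`. -/
def dyadicMax (n : ℕ) (a₁ a₂ : ℝ) (k : ℕ) (f g : Rn n → ℝ) (x : Rn n) : ℝ≥0∞ :=
  ⨆ t₁ ∈ Ioi (0 : ℝ), ⨆ t₂ ∈ Ioi (0 : ℝ), dyadicAvg n a₁ a₂ k f g t₁ t₂ x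

section Helpers
open scoped Pointwise Topology
open Filter

lemma tube_tonelli (n : ℕ) (x : Rn n) (a b ρ : ℝ) (hρ : 0 ≤ ρ) :
    ∫⁻ y : Rn n, volume {s : ℝ | s ∈ Icc a b ∧ dist y (s • x) ≤ ρ} =
      ENNReal.ofReal (b - a) * (ENNReal.ofReal (ρ ^ n) * volume (ball (0 : Rn n) 1)) := by
  have hm : MeasurableSet {p : Rn n × ℝ | p.2 ∈ Icc a b ∧ dist p.1 (p.2 • x) ≤ ρ} := by
    apply IsClosed.measurableSet
    apply IsClosed.inter
    · exact isClosed_Icc.preimage continuous_snd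
    · exact isClosed_le (continuous_fst.dist (continuous_snd.smul continuous_const)) continuous_const
  have h1 := Measure.prod_apply (μ := (volume : Measure (Rn n))) (ν := (volume : Measure ℝ)) hm
  have h2 := Measure.prod_apply_symm (μ := (volume : Measure (Rn n))) (ν := (volume : Measure ℝ)) hm
  have h3 : ∀ s : ℝ, volume ((fun y : Rn n => (y, s)) ⁻¹'
      {p : Rn n × ℝ | p.2 ∈ Icc a b ∧ dist p.1 (p.2 • x) ≤ ρ}) =
      (Icc a b).indicator (fun _ => ENNReal.ofReal (ρ ^ n) * volume (ball (0 : Rn n) 1)) s := by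
    intro s
    by_cases hs : s ∈ Icc a b
    · rw [indicator_of_mem hs]
      have : ((fun y : Rn n => (y, s)) ⁻¹'
        {p : Rn n × ℝ | p.2 ∈ Icc a b ∧ dist p.1 (p.2 • x) ≤ ρ}) = closedBall (s • x) ρ := by
        ext y
        simp only [mem_preimage, mem_ofPred_eq, mem_closedBall]
        tauto
      rw [this, Measure.addHaar_closedBall _ _ hρ]
      simp
    · rw [indicator_of_notMem hs]
      have : ((fun y : Rn n => (y, s)) ⁻¹'
        {p : Rn n × ℝ | p.2 ∈ Icc a b ∧ dist p.1 (p.2 • x) ≤ ρ}) = ∅ := by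
        ext y
        simp only [mem_preimage, mem_ofPred_eq, mem_empty_iff_false]
        tauto
      rw [this, measure_empty]
  simp_rw [h3] at h2
  rw [lintegral_indicator_const measurableSet_Icc, Real.volume_Icc, h1] at h2
  rw [mul_comm, ← h2]
  rfl

lemma tube_meas (n : ℕ) (x : Rn n) (a b ρ : ℝ) :
    Measurable fun y : Rn n => volume {s : ℝ | s ∈ Icc a b ∧ dist y (s • x) ≤ ρ} := by
  have hm : MeasurableSet {p : Rn n × ℝ | p.2 ∈ Icc a b ∧ dist p.1 (p.2 • x) ≤ ρ} := by
    apply IsClosed.measurableSet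
    apply IsClosed.inter
    · exact isClosed_Icc.preimage continuous_snd
    · exact isClosed_le (continuous_fst.dist (continuous_snd.smul continuous_const)) continuous_const
  exact measurable_measure_prodMk_left hm

lemma cone_upper (n : ℕ) (hn : 2 ≤ n) (θ : sphere (0 : Rn n) 1) (d : ℝ) (hd : 0 < d) (hd1 : d ≤ 1) :
    volume (Ioo (0 : ℝ) 1 • ((↑) '' closedBall θ d : Set (Rn n))) ≤
      ENNReal.ofReal (3 * 2 ^ (n - 1) * d ^ (n - 1)) * volume (ball (0 : Rn n) 1) := by
  set V := volume (ball (0 : Rn n) 1)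
  have h := mul_meas_ge_le_lintegral (μ := volume) (tube_meas n θ (-1) 2 (2 * d))
    (ENNReal.ofReal (2 * d))
  rw [tube_tonelli n θ (-1) 2 (2 * d) (by positivity)] at h
  have hsub : (Ioo (0 : ℝ) 1 • ((↑) '' closedBall θ d : Set (Rn n))) ⊆
      {y : Rn n | ENNReal.ofReal (2 * d) ≤
        volume {s : ℝ | s ∈ Icc (-1) 2 ∧ dist y (s • (θ : Rn n)) ≤ 2 * d}} := by
    rintro y ⟨r, hr, _, ⟨φ, hφ, rfl⟩, rfl⟩
    have hφ' : dist (φ : Rn n) θ ≤ d := hφ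
    have hsub : Icc (r - d) (r + d) ⊆
        {s : ℝ | s ∈ Icc (-1) 2 ∧ dist (r • (φ : Rn n)) (s • (θ : Rn n)) ≤ 2 * d} := by
      intro s hs
      refine ⟨⟨by linarith [hs.1, hr.1], by linarith [hs.2, hr.2]⟩, ?_⟩
      have hθ : ‖(θ : Rn n)‖ = 1 := by simp
      calc dist (r • (φ : Rn n)) (s • (θ : Rn n))
          ≤ dist (r • (φ : Rn n)) (r • (θ : Rn n)) + dist (r • (θ : Rn n)) (s • (θ : Rn n)) :=
            dist_triangle _ _ _
        _ ≤ 1 * d + |r - s| := by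
            gcongr
            · rw [dist_smul₀, Real.norm_eq_abs, abs_of_pos hr.1]
              exact mul_le_mul hr.2.le hφ' dist_nonneg zero_le_one
            · rw [dist_eq_norm, ← sub_smul, norm_smul, hθ, mul_one, Real.norm_eq_abs]
        _ ≤ 2 * d := by
            have : |r - s| ≤ d := abs_le.2 ⟨by linarith [hs.2], by linarith [hs.1]⟩
            linarith
    calc ENNReal.ofReal (2 * d) = volume (Icc (r - d) (r + d)) := by
          rw [Real.volume_Icc]; congr 1; ring
      _ ≤ _ := measure_mono hsub
  have h' := (mul_le_mul_right (measure_mono (μ := volume) hsub) (ENNReal.ofReal (2 * d))).trans h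
  have hpos : 0 < 2 * d := by positivity
  have hne : ENNReal.ofReal (2 * d) ≠ 0 := by simpa using hd
  rw [← ENNReal.mul_le_mul_iff_right hne ENNReal.ofReal_ne_top]
  refine h'.trans (le_of_eq ?_)
  rw [← mul_assoc, ← mul_assoc, ← ENNReal.ofReal_mul (by norm_num), ← ENNReal.ofReal_mul hpos.le]
  congr 2
  obtain ⟨m, rfl⟩ : ∃ m, n = m + 1 := ⟨n - 1, by omega⟩
  simp only [Nat.add_sub_cancel]
  ring

lemma cone_lower (n : ℕ) (hn : 2 ≤ n) (θ : sphere (0 : Rn n) 1) (d : ℝ) (hd : 0 < d) (hd1 : d ≤ 1) :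
    ENNReal.ofReal (1 / 8 * (1 / 8) ^ (n - 1) * d ^ (n - 1)) * volume (ball (0 : Rn n) 1) ≤
    volume (Ioo (0 : ℝ) 1 • ((↑) '' closedBall θ d : Set (Rn n))) := by
  set V := volume (ball (0 : Rn n) 1)
  set A := (Ioo (0 : ℝ) 1 • ((↑) '' closedBall θ d : Set (Rn n)))
  have hθ : ‖(θ : Rn n)‖ = 1 := by simp
  have hpos : 0 < 2 * (d / 8) := by positivity
  have h := tube_tonelli n θ (1 / 2) (3 / 4) (d / 8) (by positivity)
  have hle : ∫⁻ y : Rn n, volume {s : ℝ | s ∈ Icc (1 / 2) (3 / 4) ∧ dist y (s • (θ : Rn n)) ≤ d / 8} ≤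
      ∫⁻ y, A.indicator (fun _ => ENNReal.ofReal (2 * (d / 8))) y := by
    apply lintegral_mono
    intro y
    have key : ∀ s : ℝ, dist y (s • (θ : Rn n)) ≤ d / 8 → 0 ≤ s → |‖y‖ - s| ≤ d / 8 := by
      intro s hs hs0
      have := abs_norm_sub_norm_le y (s • (θ : Rn n))
      rw [norm_smul, hθ, mul_one, Real.norm_eq_abs, abs_of_nonneg hs0, ← dist_eq_norm] at this
      exact this.trans hs
    by_cases hy : y ∈ A
    · simp only [indicator_of_mem hy]
      calc _ ≤ volume (Icc (‖y‖ - d / 8) (‖y‖ + d / 8)) := by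
            apply measure_mono
            rintro s ⟨hs, hs'⟩
            have := abs_le.1 (key s hs' (by linarith [hs.1]))
            exact ⟨by linarith [this.2], by linarith [this.1]⟩
        _ = _ := by rw [Real.volume_Icc]; congr 1; ring
    · simp only [indicator_of_notMem hy, nonpos_iff_eq_zero]
      convert measure_empty (μ := (volume : Measure ℝ))
      rw [eq_empty_iff_forall_notMem]
      rintro s ⟨hs, hs'⟩
      apply hy
      have h2 := key s hs' (by linarith [hs.1])
      have h3 := abs_le.1 h2
      have hy1 : 3 / 8 ≤ ‖y‖ := by linarith [hs.1, h3.1]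
      have hy0 : 0 < ‖y‖ := by linarith
      refine ⟨‖y‖, ⟨hy0, by linarith [hs.2, h3.2]⟩, ‖y‖⁻¹ • y, ?_, ?_⟩
      · refine ⟨⟨‖y‖⁻¹ • y, by simp [norm_smul, hy0.ne']⟩, ?_, rfl⟩
        change dist (‖y‖⁻¹ • y) (θ : Rn n) ≤ d
        have e : ‖y‖⁻¹ • y - (θ : Rn n) = ‖y‖⁻¹ • ((y - s • (θ : Rn n)) + (s - ‖y‖) • (θ : Rn n)) := by
          rw [sub_smul, sub_add_sub_cancel, smul_sub, smul_smul, inv_mul_cancel₀ hy0.ne', one_smul]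
        rw [dist_eq_norm, e, norm_smul, norm_inv, norm_norm, inv_mul_le_iff₀ hy0]
        calc ‖(y - s • (θ : Rn n)) + (s - ‖y‖) • (θ : Rn n)‖ ≤ d / 8 + d / 8 := by
              refine (norm_add_le _ _).trans (add_le_add ?_ ?_)
              · rwa [← dist_eq_norm]
              · rw [norm_smul, hθ, mul_one, Real.norm_eq_abs, abs_sub_comm]; exact h2
          _ ≤ ‖y‖ * d := by nlinarith
      · simp [smul_smul, hy0.ne']
  rw [h] at hle
  have h' := hle.trans (lintegral_indicator_const_le _ _)
  have hne : ENNReal.ofReal (2 * (d / 8)) ≠ 0 := by simpa using hd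
  rw [← ENNReal.mul_le_mul_iff_right hne ENNReal.ofReal_ne_top]
  refine (le_of_eq ?_).trans h'
  rw [← mul_assoc, ← mul_assoc, ← ENNReal.ofReal_mul hpos.le, ← ENNReal.ofReal_mul (by norm_num)]
  congr 2
  obtain ⟨m, rfl⟩ : ∃ m, n = m + 1 := ⟨n - 1, by omega⟩
  simp only [Nat.add_sub_cancel]
  ring

lemma hausdorff_le_of_lower {S : Type*} [MetricSpace S] [SecondCountableTopology S]
    [MeasurableSpace S] [BorelSpace S] (ν : Measure S) [ν.OuterRegular] (m : ℕ) (c : ℝ) (hc : 0 < c)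
    (h : ∀ (x : S) (r : ℝ), 0 < r → r ≤ 1 → ENNReal.ofReal (c * r ^ m) ≤ ν (closedBall x r)) :
    (μH[(m : ℝ)] : Measure S) ≤ ENNReal.ofReal (10 ^ m / c) • ν := by
  have hopen : ∀ U : Set S, IsOpen U → (μH[(m : ℝ)] : Measure S) U ≤ ENNReal.ofReal (10 ^ m / c) * ν U := by
    intro U hU
    have hr : ∀ (N : ℕ) (x : S), ∃ r : ℝ, 0 < r ∧ r ≤ 1 / ((N : ℝ) + 1) ∧ (x ∈ U → closedBall x r ⊆ U) := by
      intro N x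
      have hN : (0 : ℝ) < 1 / ((N : ℝ) + 1) := by positivity
      by_cases hx : x ∈ U
      · obtain ⟨ε, hε, hεU⟩ := Metric.nhds_basis_closedBall.mem_iff.1 (hU.mem_nhds hx)
        exact ⟨min ε (1 / ((N : ℝ) + 1)), lt_min hε hN, min_le_right _ _,
          fun _ => (closedBall_subset_closedBall (min_le_left _ _)).trans hεU⟩
      · exact ⟨_, hN, le_rfl, fun h => absurd h hx⟩
    choose r hr0 hr1 hrU using hr
    have hv := fun N : ℕ => Vitali.exists_disjoint_subfamily_covering_enlargement_closedBall
      U (fun x : S => x) (r N) (1 / ((N : ℝ) + 1)) (fun a _ => hr1 N a) 5 (by norm_num)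
    choose u huU hdisj hcov using hv
    have hcount : ∀ N, (u N).Countable := fun N =>
      (hdisj N).countable_of_nonempty_interior fun x _ =>
        ⟨x, mem_interior_iff_mem_nhds.2 (closedBall_mem_nhds x (hr0 N x))⟩
    have : ∀ N, Countable (u N) := fun N => (hcount N).to_subtype
    have hediam : ∀ N (x : S), ediam (closedBall x (5 * r N x)) ≤ ENNReal.ofReal (10 * r N x) := by
      intro N x
      apply ediam_le
      intro y hy z hz
      rw [edist_dist]
      apply ENNReal.ofReal_le_ofReal
      have := dist_triangle_right y z x
      rw [mem_closedBall] at hy hz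
      linarith
    have key := Measure.hausdorffMeasure_le_liminf_tsum (m : ℝ) U (l := atTop) (ι := fun N => u N)
      (fun N : ℕ => ENNReal.ofReal (10 * (1 / ((N : ℝ) + 1))))
      (by
        rw [← ENNReal.ofReal_zero]
        apply ENNReal.tendsto_ofReal
        have := (tendsto_one_div_add_atTop_nhds_zero_nat (𝕜 := ℝ)).const_mul 10
        simpa using this)
      (fun N i => closedBall (i : S) (5 * r N i))
      (Eventually.of_forall fun N i => (hediam N i).trans
        (ENNReal.ofReal_le_ofReal (mul_le_mul_of_nonneg_left (hr1 N i) (by norm_num))))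
      (Eventually.of_forall fun N x hx => by
        obtain ⟨b, hb, hsub⟩ := hcov N x hx
        exact mem_iUnion.2 ⟨⟨b, hb⟩, hsub (mem_closedBall_self (hr0 N x).le)⟩)
    refine key.trans ?_
    rw [← liminf_const (f := (atTop : Filter ℕ)) (ENNReal.ofReal (10 ^ m / c) * ν U)]
    refine liminf_le_liminf (Eventually.of_forall fun N => ?_)
    calc ∑' i : u N, ediam (closedBall (i : S) (5 * r N i)) ^ (m : ℝ)
        ≤ ∑' i : u N, ENNReal.ofReal (10 ^ m / c) * ν (closedBall (i : S) (r N i)) := by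
          apply ENNReal.tsum_le_tsum
          intro i
          rw [ENNReal.rpow_natCast]
          have hle1 : r N i ≤ 1 := (hr1 N i).trans (by
            rw [div_le_one (by positivity)]; linarith [(Nat.cast_nonneg N : (0 : ℝ) ≤ N)])
          calc _ ≤ (ENNReal.ofReal (10 * r N i)) ^ m := by gcongr; exact hediam N i
            _ = ENNReal.ofReal (10 ^ m / c) * ENNReal.ofReal (c * r N i ^ m) := by
              rw [← ENNReal.ofReal_pow (by have := hr0 N i; positivity),
                ← ENNReal.ofReal_mul (by positivity)]
              congr 1
              rw [mul_pow]
              field_simp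
            _ ≤ _ := by gcongr; exact h _ _ (hr0 N i) hle1
      _ = ENNReal.ofReal (10 ^ m / c) * ν (⋃ i ∈ u N, closedBall i (r N i)) := by
          rw [ENNReal.tsum_mul_left, measure_biUnion (hcount N) (hdisj N)
            (fun i _ => isClosed_closedBall.measurableSet)]
      _ ≤ ENNReal.ofReal (10 ^ m / c) * ν U := by
          gcongr
          exact iUnion₂_subset fun i hi => hrU N i (huU N hi)
  refine Measure.le_iff.2 fun A _ => ?_
  rw [Measure.smul_apply, smul_eq_mul]
  refine ENNReal.le_of_forall_pos_le_add fun ε hε _ => ?_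
  have hK : 0 < 10 ^ m / c := by positivity
  obtain ⟨U, hAU, hU, hlt⟩ := A.exists_isOpen_le_add ν
    (ε := ε / ENNReal.ofReal (10 ^ m / c)) (by simp [hε.ne'])
  calc _ ≤ (μH[(m : ℝ)] : Measure S) U := measure_mono hAU
    _ ≤ _ := hopen U hU
    _ ≤ ENNReal.ofReal (10 ^ m / c) * (ν A + ε / ENNReal.ofReal (10 ^ m / c)) := by gcongr
    _ = _ := by
      rw [mul_add, ENNReal.mul_div_cancel (by simpa using hK) ENNReal.ofReal_ne_top]

lemma le_hausdorff_of_upper {S : Type*} [MetricSpace S]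
    [MeasurableSpace S] [BorelSpace S] (ν : Measure S) (m : ℕ) (hm : m ≠ 0) (K : ℝ) (hK : 0 < K)
    (h : ∀ (x : S) (r : ℝ), 0 < r → r ≤ 1 → ν (closedBall x r) ≤ ENNReal.ofReal (K * r ^ m)) :
    ν ≤ ENNReal.ofReal K • (μH[(m : ℝ)] : Measure S) := by
  have hK0 : ENNReal.ofReal K ≠ 0 := by simpa using hK
  have key : (ENNReal.ofReal K)⁻¹ • ν ≤ (μH[(m : ℝ)] : Measure S) := by
    refine Measure.le_hausdorffMeasure _ _ 1 one_pos fun s hs => ?_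
    rw [Measure.smul_apply, smul_eq_mul, ENNReal.rpow_natCast,
      ENNReal.inv_mul_le_iff hK0 ENNReal.ofReal_ne_top]
    rcases s.eq_empty_or_nonempty with rfl | ⟨x, hx⟩
    · simp
    have hfin : ediam s ≠ ∞ := ne_top_of_le_ne_top ENNReal.one_ne_top hs
    have hsub : ∀ r : ℝ, (ediam s).toReal ≤ r → s ⊆ closedBall x r := by
      intro r hr y hy
      have := ENNReal.toReal_mono hfin (edist_le_ediam_of_mem hy hx)
      rw [edist_dist, ENNReal.toReal_ofReal dist_nonneg] at this
      exact this.trans hr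
    have hle1 : (ediam s).toReal ≤ 1 := by simpa using ENNReal.toReal_mono ENNReal.one_ne_top hs
    rcases (ENNReal.toReal_nonneg (a := ediam s)).eq_or_lt with h0 | h0
    · have hz : ν s ≤ 0 := by
        have ht : Tendsto (fun r : ℝ => ENNReal.ofReal (K * r ^ m)) (𝓝[>] 0) (𝓝 0) := by
          rw [← ENNReal.ofReal_zero]
          apply ENNReal.tendsto_ofReal
          have : Tendsto (fun r : ℝ => K * r ^ m) (𝓝 0) (𝓝 (K * 0 ^ m)) :=
            (Continuous.tendsto (by fun_prop) 0)
          rw [zero_pow hm, mul_zero] at this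
          exact this.mono_left nhdsWithin_le_nhds
        refine ge_of_tendsto ht ?_
        filter_upwards [Ioc_mem_nhdsGT (zero_lt_one' ℝ)] with r hr
        exact (measure_mono (hsub r (by linarith [hr.1]))).trans (h x r hr.1 hr.2)
      exact hz.trans zero_le
    · refine (measure_mono (hsub _ le_rfl)).trans ((h x _ h0 hle1).trans (le_of_eq ?_))
      rw [ENNReal.ofReal_mul hK.le, ENNReal.ofReal_pow h0.le, ENNReal.ofReal_toReal hfin]
  refine Measure.le_iff.2 fun A _ => ?_
  have := Measure.le_iff'.1 key A
  rw [Measure.smul_apply, smul_eq_mul, ENNReal.inv_mul_le_iff hK0 ENNReal.ofReal_ne_top] at this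
  exact this

/-- The Hausdorff measure on the sphere. -/
def sphH (n : ℕ) : Measure (sphere (0 : Rn n) 1) := μH[(n : ℝ) - 1]

lemma sphH_comparable (n : ℕ) (hn : 2 ≤ n) : ∃ C : ℝ≥0,
    (volume : Measure (Rn n)).toSphere ≤ (C : ℝ≥0∞) • sphH n ∧
    sphH n ≤ (C : ℝ≥0∞) • (volume : Measure (Rn n)).toSphere := by
  have hcast : (n : ℝ) - 1 = ((n - 1 : ℕ) : ℝ) := by
    rw [Nat.cast_sub (by omega)]; simp
  set V := volume (ball (0 : Rn n) 1) with hV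
  have hVpos : 0 < V := measure_ball_pos _ _ one_pos
  have hVtop : V ≠ ∞ := measure_ball_lt_top.ne
  have hVr : 0 < V.toReal := ENNReal.toReal_pos hVpos.ne' hVtop
  have hnr : (0 : ℝ) < n := by positivity
  have hdim : Module.finrank ℝ (Rn n) = n := by simp
  have hform : ∀ a : ℝ, 0 ≤ a → (n : ℝ≥0∞) * (ENNReal.ofReal a * V) =
      ENNReal.ofReal (n * V.toReal * a) := by
    intro a ha
    rw [ENNReal.ofReal_mul (by positivity), ENNReal.ofReal_mul hnr.le, ENNReal.ofReal_toReal hVtop,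
      ENNReal.ofReal_natCast]
    ring
  have h1 := le_hausdorff_of_upper (volume : Measure (Rn n)).toSphere (n - 1) (by omega)
    (n * V.toReal * (3 * 2 ^ (n - 1))) (by positivity) (by
      intro θ d hd hd1
      rw [Measure.toSphere_apply' _ isClosed_closedBall.measurableSet, hdim]
      refine (mul_le_mul_right (cone_upper n hn θ d hd hd1) _).trans (le_of_eq ?_)
      rw [hform _ (by positivity), mul_assoc (_ * _)])
  have h2 := hausdorff_le_of_lower (volume : Measure (Rn n)).toSphere (n - 1)
    (n * V.toReal * (1 / 8 * (1 / 8) ^ (n - 1))) (by positivity) (by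
      intro θ d hd hd1
      rw [Measure.toSphere_apply' _ isClosed_closedBall.measurableSet, hdim]
      refine le_trans (le_of_eq ?_) (mul_le_mul_right (cone_lower n hn θ d hd hd1) _)
      rw [hform _ (by positivity), mul_assoc (_ * _)])
  rw [← hcast] at h1 h2
  refine ⟨max (Real.toNNReal (n * V.toReal * (3 * 2 ^ (n - 1))))
    (Real.toNNReal (10 ^ (n - 1) / (n * V.toReal * (1 / 8 * (1 / 8) ^ (n - 1))))), ?_, ?_⟩
  · refine h1.trans (Measure.le_iff.2 fun A _ => ?_)
    simp only [Measure.smul_apply, smul_eq_mul]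
    unfold sphH
    gcongr
    exact ENNReal.coe_le_coe.2 (le_max_left _ _)
  · refine h2.trans (Measure.le_iff.2 fun A _ => ?_)
    simp only [Measure.smul_apply, smul_eq_mul]
    gcongr
    exact ENNReal.coe_le_coe.2 (le_max_right _ _)

lemma sphAvgE_eq (n : ℕ) (hn : 2 ≤ n) (g : Rn n → ℝ) (x : Rn n) (t : ℝ) :
    sphAvgE n g x t = ∫⁻ θ : sphere (0 : Rn n) 1, ENNReal.ofReal (g (x - t • (θ : Rn n))) ∂(sphH n) := by
  have hn1 : (0 : ℝ) ≤ (n : ℝ) - 1 := by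
    have : (2 : ℝ) ≤ n := by exact_mod_cast hn
    linarith
  have h := (isometry_subtype_coe (s := sphere (0 : Rn n) 1)).map_hausdorffMeasure
    (d := (n : ℝ) - 1) (Or.inl hn1)
  rw [Subtype.range_coe] at h
  unfold sphAvgE μSph sphH
  rw [← h, (MeasurableEmbedding.subtype_coe isClosed_sphere.measurableSet).lintegral_map]

lemma polar_lintegral (n : ℕ) (hn : 2 ≤ n) (G : Rn n → ℝ≥0∞) (hG : Measurable G) :
    ∫⁻ y, G y = ∫⁻ r in Ioi (0 : ℝ), ENNReal.ofReal (r ^ (n - 1)) *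
      ∫⁻ θ : sphere (0 : Rn n) 1, G (r • (θ : Rn n)) ∂(volume : Measure (Rn n)).toSphere := by
  have hnt : Nontrivial (Rn n) := by
    have : Nonempty (Fin n) := ⟨⟨0, by omega⟩⟩
    infer_instance
  have hdim : Module.finrank ℝ (Rn n) = n := by simp
  have hmp := (volume : Measure (Rn n)).measurePreserving_homeomorphUnitSphereProd
  rw [hdim] at hmp
  have hGm : Measurable fun p : sphere (0 : Rn n) 1 × Ioi (0 : ℝ) => G ((p.2 : ℝ) • (p.1 : Rn n)) :=
    hG.comp (by fun_prop)
  calc ∫⁻ y, G y = ∫⁻ y in ({0}ᶜ : Set (Rn n)), G y := by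
        rw [restrict_compl_singleton]
    _ = ∫⁻ y : ({0}ᶜ : Set (Rn n)), G y ∂(Measure.comap Subtype.val volume) :=
        (lintegral_subtype_comap (measurableSet_singleton _).compl G).symm
    _ = ∫⁻ y : ({0}ᶜ : Set (Rn n)), (fun p : sphere (0 : Rn n) 1 × Ioi (0 : ℝ) =>
          G ((p.2 : ℝ) • (p.1 : Rn n))) (homeomorphUnitSphereProd (Rn n) y)
          ∂(Measure.comap Subtype.val volume) := by
        congr 1
        ext y
        have : (y : Rn n) ≠ 0 := y.2
        simp [smul_smul, this]
    _ = ∫⁻ p, G ((p.2 : ℝ) • (p.1 : Rn n))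
          ∂((volume : Measure (Rn n)).toSphere.prod (Measure.volumeIoiPow (n - 1))) := by
        rw [hmp.lintegral_comp hGm]
    _ = ∫⁻ r : Ioi (0 : ℝ), ∫⁻ θ : sphere (0 : Rn n) 1, G ((r : ℝ) • (θ : Rn n))
          ∂(volume : Measure (Rn n)).toSphere ∂(Measure.volumeIoiPow (n - 1)) :=
        lintegral_prod_symm _ hGm.aemeasurable
    _ = ∫⁻ r : Ioi (0 : ℝ), (fun r : ℝ => ENNReal.ofReal (r ^ (n - 1)) *
          ∫⁻ θ : sphere (0 : Rn n) 1, G (r • (θ : Rn n)) ∂(volume : Measure (Rn n)).toSphere) r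
          ∂(Measure.comap Subtype.val volume) := by
        unfold Measure.volumeIoiPow
        rw [lintegral_withDensity_eq_lintegral_mul _ (by fun_prop) hGm.lintegral_prod_left']
        rfl
    _ = _ := lintegral_subtype_comap (μ := (volume : Measure ℝ)) (s := Ioi (0 : ℝ))
        measurableSet_Ioi (fun r : ℝ => ENNReal.ofReal (r ^ (n - 1)) *
          ∫⁻ θ : sphere (0 : Rn n) 1, G (r • (θ : Rn n)) ∂(volume : Measure (Rn n)).toSphere)

lemma ball_avg_le (n : ℕ) (f : Rn n → ℝ) (hf : Measurable f) (hf0 : ∀ y, 0 ≤ f y) (x : Rn n)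
    (t R : ℝ) (ht : 0 < t) (hR : 0 < R) :
    ∫⁻ y in ball (0 : Rn n) R, ENNReal.ofReal (f (x - t • y)) ≤
      ENNReal.ofReal (R ^ n) * volume (ball (0 : Rn n) 1) * HLMax n f x := by
  set G : Rn n → ℝ≥0∞ := (ball x (t * R)).indicator fun z => ENNReal.ofReal (f z) with hGdef
  have hG : Measurable G := (by fun_prop : Measurable fun z => ENNReal.ofReal (f z)).indicator
    measurableSet_ball
  have hdim : Module.finrank ℝ (Rn n) = n := by simp
  have htR : 0 < t * R := by positivity
  have hvol : volume (ball x (t * R)) = ENNReal.ofReal ((t * R) ^ n) * volume (ball (0 : Rn n) 1) := by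
    rw [Measure.addHaar_ball_of_pos _ _ htR, hdim]
  calc ∫⁻ y in ball (0 : Rn n) R, ENNReal.ofReal (f (x - t • y)) = ∫⁻ y, G (x - t • y) := by
        rw [← lintegral_indicator measurableSet_ball]
        congr 1
        ext y
        have : y ∈ ball (0 : Rn n) R ↔ x - t • y ∈ ball x (t * R) := by
          rw [mem_ball_zero_iff, mem_ball, dist_eq_norm, sub_sub_cancel_left, norm_neg, norm_smul,
            Real.norm_eq_abs, abs_of_pos ht, mul_lt_mul_iff_right₀ ht]
        by_cases hy : y ∈ ball (0 : Rn n) R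
        · rw [indicator_of_mem hy, hGdef, indicator_of_mem (this.1 hy)]
        · rw [indicator_of_notMem hy, hGdef, indicator_of_notMem (fun h => hy (this.2 h))]
    _ = ∫⁻ z, G (x - z) ∂(Measure.map (fun y : Rn n => t • y) volume) := by
        rw [lintegral_map (by fun_prop) (by fun_prop)]
    _ = ENNReal.ofReal ((t ^ n)⁻¹) * ∫⁻ z, G z := by
        have := Measure.map_addHaar_smul (volume : Measure (Rn n)) ht.ne'
        rw [this, lintegral_smul_measure, hdim, lintegral_sub_left_eq_self,
          abs_of_pos (by positivity), smul_eq_mul]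
    _ = ENNReal.ofReal ((t ^ n)⁻¹) * ∫⁻ z in ball x (t * R), ENNReal.ofReal |f z| := by
        rw [hGdef, lintegral_indicator measurableSet_ball]
        simp_rw [abs_of_nonneg (hf0 _)]
    _ ≤ ENNReal.ofReal ((t ^ n)⁻¹) * (volume (ball x (t * R)) * HLMax n f x) := by
        gcongr
        rw [mul_comm (volume _), ← ENNReal.div_le_iff (measure_ball_pos _ _ htR).ne' measure_ball_lt_top.ne]
        exact le_iSup₂_of_le (t * R) htR le_rfl
    _ = _ := by
        rw [hvol, ← mul_assoc, ← mul_assoc, ← ENNReal.ofReal_mul (by positivity)]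
        congr 3
        rw [mul_pow]
        field_simp

lemma sphAvgE_le_sphMax (n : ℕ) (g : Rn n → ℝ) (x : Rn n) (t : ℝ) (ht : 0 < t) :
    sphAvgE n g x t ≤ sphMax n g x :=
  le_iSup₂_of_le (f := fun t (_ : t ∈ Ioi (0 : ℝ)) => sphAvgE n g x t) t ht le_rfl

lemma measurable_sphAvgE (n : ℕ) (hn : 2 ≤ n) (g : Rn n → ℝ) (hg : Measurable g) (x : Rn n) :
    Measurable fun t => sphAvgE n g x t := by
  obtain ⟨C, -, hC⟩ := sphH_comparable n hn
  have : IsFiniteMeasure (sphH n) := ⟨by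
    refine lt_of_le_of_lt (Measure.le_iff'.1 hC univ) ?_
    rw [Measure.smul_apply, smul_eq_mul]
    exact ENNReal.mul_lt_top ENNReal.coe_lt_top (measure_lt_top _ _)⟩
  simp_rw [sphAvgE_eq n hn]
  have : Measurable fun p : ℝ × sphere (0 : Rn n) 1 => ENNReal.ofReal (g (x - p.1 • (p.2 : Rn n))) :=
    (hg.comp (by fun_prop)).ennreal_ofReal
  exact this.lintegral_prod_right'

lemma radial_bound (n : ℕ) (hn : 2 ≤ n) (C : ℝ≥0)
    (hC : sphH n ≤ (C : ℝ≥0∞) • (volume : Measure (Rn n)).toSphere)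
    (g : Rn n → ℝ) (hg : Measurable g) (hg0 : ∀ y, 0 ≤ g y) (x : Rn n)
    (t S : ℝ) (ht : 0 < t) (hS : 0 < S) :
    ∫⁻ s in Ioc 0 S, ENNReal.ofReal (s ^ (n - 1)) * sphAvgE n g x (t * s) ≤
      C * (ENNReal.ofReal ((2 * S) ^ n) * volume (ball (0 : Rn n) 1) * HLMax n g x) := by
  have hGm0 : Measurable fun y : Rn n => ENNReal.ofReal (g (x - t • y)) :=
    (hg.comp (by fun_prop)).ennreal_ofReal
  set G : Rn n → ℝ≥0∞ := (ball 0 (2 * S)).indicator fun y => ENNReal.ofReal (g (x - t • y)) with hGdef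
  have hG : Measurable G := hGm0.indicator measurableSet_ball
  calc _ ≤ ∫⁻ s in Ioc 0 S, C * (ENNReal.ofReal (s ^ (n - 1)) *
        ∫⁻ θ : sphere (0 : Rn n) 1, G (s • (θ : Rn n)) ∂(volume : Measure (Rn n)).toSphere) := by
        refine setLIntegral_mono' measurableSet_Ioc fun s hs => ?_
        rw [mul_left_comm]
        gcongr
        rw [sphAvgE_eq n hn]
        refine (lintegral_mono' hC le_rfl).trans ?_
        rw [lintegral_smul_measure, smul_eq_mul]
        gcongr with θ
        have : s • (θ : Rn n) ∈ ball (0 : Rn n) (2 * S) := by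
          rw [mem_ball_zero_iff, norm_smul, Real.norm_eq_abs, abs_of_pos hs.1]
          simp
          linarith [hs.2]
        rw [hGdef, indicator_of_mem this, smul_smul]
    _ ≤ ∫⁻ s in Ioi 0, C * (ENNReal.ofReal (s ^ (n - 1)) *
        ∫⁻ θ : sphere (0 : Rn n) 1, G (s • (θ : Rn n)) ∂(volume : Measure (Rn n)).toSphere) :=
        lintegral_mono_set fun s hs => hs.1
    _ = C * ∫⁻ y, G y := by
        rw [lintegral_const_mul' _ _ ENNReal.coe_ne_top, ← polar_lintegral n hn G hG]
    _ ≤ _ := by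
        gcongr
        rw [hGdef, lintegral_indicator measurableSet_ball]
        exact ball_avg_le n g hg hg0 x t (2 * S) ht (by positivity)

lemma jac_ineq (n : ℕ) (hn : 2 ≤ n) (a₁ a₂ : ℝ) (ha₁ : 1 ≤ a₁) (ha₂ : 1 ≤ a₂)
    (ha₁n : a₁ ≤ n) (r : ℝ) (hr0 : 0 < r) (hr1 : r ≤ 1) (hu : 0 < 1 - r ^ a₁) :
    r ^ (n - 1) * ((1 - r ^ a₁) ^ (1 / a₂)) ^ ((n : ℝ) - a₂) ≤
      a₂ * (|-(a₁ * r ^ (a₁ - 1)) * (1 / a₂) * (1 - r ^ a₁) ^ (1 / a₂ - 1)| *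
        ((1 - r ^ a₁) ^ (1 / a₂)) ^ (n - 1)) := by
  set u := 1 - r ^ a₁
  have ha₂0 : 0 < a₂ := by linarith
  have ha₁0 : 0 < a₁ := by linarith
  have hcast : ((n - 1 : ℕ) : ℝ) = (n : ℝ) - 1 := by
    rw [Nat.cast_sub (by omega)]; simp
  have e1 : |-(a₁ * r ^ (a₁ - 1)) * (1 / a₂) * u ^ (1 / a₂ - 1)| =
      a₁ * r ^ (a₁ - 1) * (1 / a₂) * u ^ (1 / a₂ - 1) := by
    rw [neg_mul, neg_mul, abs_neg, abs_of_nonneg (by positivity)]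
  have e2 : (u ^ (1 / a₂)) ^ ((n : ℝ) - a₂) = u ^ (1 / a₂ - 1) * (u ^ (1 / a₂)) ^ (n - 1) := by
    rw [← Real.rpow_natCast (u ^ (1 / a₂)), ← Real.rpow_mul hu.le, ← Real.rpow_mul hu.le,
      ← Real.rpow_add hu, hcast]
    congr 1
    field_simp
    ring
  have e3 : r ^ (n - 1) ≤ a₁ * r ^ (a₁ - 1) := by
    calc r ^ (n - 1) = r ^ ((n : ℝ) - 1) := by rw [← hcast, Real.rpow_natCast]
      _ ≤ r ^ (a₁ - 1) := Real.rpow_le_rpow_of_exponent_ge hr0 hr1 (by linarith)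
      _ ≤ _ := le_mul_of_one_le_left (by positivity) ha₁
  rw [e1, e2]
  calc _ ≤ a₁ * r ^ (a₁ - 1) * (u ^ (1 / a₂ - 1) * (u ^ (1 / a₂)) ^ (n - 1)) := by gcongr
    _ = _ := by field_simp

lemma bound_one (n : ℕ) (a₁ a₂ : ℝ) (ha₁ : 1 ≤ a₁) (ha₂ : 1 ≤ a₂)
    (ha₂n : (n : ℝ) < a₂) (f g : Rn n → ℝ)
    (hf : Measurable f) (hf0 : ∀ y, 0 ≤ f y) (x : Rn n) (k : ℕ)
    (t₁ t₂ : ℝ) (ht₁ : 0 < t₁) (ht₂ : 0 < t₂) :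
    dyadicAvg n a₁ a₂ k f g t₁ t₂ x ≤ volume (ball (0 : Rn n) 1) *
      ENNReal.ofReal ((2 : ℝ) ^ ((k : ℝ) * (a₂ - n) / a₂)) * HLMax n f x * sphMax n g x := by
  have ha₂0 : 0 < a₂ := by linarith
  set D := {y : Rn n | (2 : ℝ) ^ (-(k : ℝ)) ≤ 1 - ‖y‖ ^ a₁ ∧ 1 - ‖y‖ ^ a₁ ≤ 2 ^ (1 - (k : ℝ))} with hD
  have hcont : Continuous fun y : Rn n => 1 - ‖y‖ ^ a₁ :=
    continuous_const.sub (continuous_norm.rpow_const fun _ => Or.inr (by linarith))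
  have hDm : MeasurableSet D := (isClosed_Icc.preimage hcont).measurableSet
  have h2k : (0 : ℝ) < 2 ^ (-(k : ℝ)) := by positivity
  have hDsub : D ⊆ ball (0 : Rn n) 1 := by
    intro y hy
    rw [mem_ball_zero_iff]
    by_contra hcon
    have := Real.one_le_rpow (not_lt.1 hcon) (by linarith : 0 ≤ a₁)
    linarith [hy.1]
  have hfm : Measurable fun y : Rn n => ENNReal.ofReal (f (x - t₁ • y)) :=
    (hf.comp (by fun_prop)).ennreal_ofReal
  calc dyadicAvg n a₁ a₂ k f g t₁ t₂ x
      ≤ ∫⁻ y in D, ENNReal.ofReal (f (x - t₁ • y)) *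
        ENNReal.ofReal ((2 : ℝ) ^ ((k : ℝ) * (a₂ - n) / a₂)) * sphMax n g x := by
        refine setLIntegral_mono' hDm fun y hy => ?_
        have hu : 0 < 1 - ‖y‖ ^ a₁ := h2k.trans_le hy.1
        gcongr
        · unfold omegaW
          rw [← Real.rpow_mul hu.le]
          calc _ ≤ ((2 : ℝ) ^ (-(k : ℝ))) ^ (1 / a₂ * ((n : ℝ) - a₂)) :=
                Real.rpow_le_rpow_of_nonpos h2k hy.1
                  (mul_nonpos_of_nonneg_of_nonpos (by positivity) (by linarith))
            _ = _ := by
                rw [← Real.rpow_mul (by norm_num)]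
                congr 1
                ring
        · apply sphAvgE_le_sphMax
          unfold omegaW
          positivity
    _ = (∫⁻ y in D, ENNReal.ofReal (f (x - t₁ • y))) *
        ENNReal.ofReal ((2 : ℝ) ^ ((k : ℝ) * (a₂ - n) / a₂)) * sphMax n g x := by
        rw [lintegral_mul_const _ (hfm.mul_const _), lintegral_mul_const _ hfm]
    _ ≤ (∫⁻ y in ball (0 : Rn n) 1, ENNReal.ofReal (f (x - t₁ • y))) *
        ENNReal.ofReal ((2 : ℝ) ^ ((k : ℝ) * (a₂ - n) / a₂)) * sphMax n g x := by
        gcongr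
    _ ≤ (ENNReal.ofReal (1 ^ n) * volume (ball (0 : Rn n) 1) * HLMax n f x) *
        ENNReal.ofReal ((2 : ℝ) ^ ((k : ℝ) * (a₂ - n) / a₂)) * sphMax n g x := by
        gcongr
        exact ball_avg_le n f hf hf0 x t₁ 1 ht₁ one_pos
    _ = _ := by
        simp only [one_pow, ENNReal.ofReal_one, one_mul]
        ring

lemma bound_two (n : ℕ) (hn : 2 ≤ n) (a₁ a₂ : ℝ) (ha₁ : 1 ≤ a₁) (ha₂ : 1 ≤ a₂)
    (ha₁n : a₁ ≤ n) (ha₂n : (n : ℝ) < a₂) (C : ℝ≥0)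
    (hC1 : (volume : Measure (Rn n)).toSphere ≤ (C : ℝ≥0∞) • sphH n)
    (hC2 : sphH n ≤ (C : ℝ≥0∞) • (volume : Measure (Rn n)).toSphere)
    (f g : Rn n → ℝ)
    (hf : Measurable f) (hg : Measurable g) (hg0 : ∀ y, 0 ≤ g y) (x : Rn n) (k : ℕ)
    (t₁ t₂ : ℝ) (ht₁ : 0 < t₁) (ht₂ : 0 < t₂) :
    dyadicAvg n a₁ a₂ k f g t₁ t₂ x ≤
      (C * C * ENNReal.ofReal (a₂ * 2 ^ (n + 1)) * volume (ball (0 : Rn n) 1)) *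
      ENNReal.ofReal ((2 : ℝ) ^ (-(k : ℝ) * n / a₂)) * sphMax n f x * HLMax n g x := by
  have ha₂0 : 0 < a₂ := by linarith
  have ha₁0 : 0 < a₁ := by linarith
  set w : ℝ → ℝ := fun r => (1 - r ^ a₁) ^ (1 / a₂) with hw
  set w' : ℝ → ℝ := fun r => -(a₁ * r ^ (a₁ - 1)) * (1 / a₂) * (1 - r ^ a₁) ^ (1 / a₂ - 1) with hw'
  set D := {y : Rn n | (2 : ℝ) ^ (-(k : ℝ)) ≤ 1 - ‖y‖ ^ a₁ ∧ 1 - ‖y‖ ^ a₁ ≤ 2 ^ (1 - (k : ℝ))} with hD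
  set J := {r : ℝ | (2 : ℝ) ^ (-(k : ℝ)) ≤ 1 - r ^ a₁ ∧ 1 - r ^ a₁ ≤ 2 ^ (1 - (k : ℝ))} with hJ
  have hwm : Measurable w := by fun_prop
  have hw'm : Measurable w' := by fun_prop
  have hsm := measurable_sphAvgE n hn g hg x
  have hDm : MeasurableSet D :=
    measurableSet_Icc.preimage (by fun_prop : Measurable fun y : Rn n => 1 - ‖y‖ ^ a₁)
  have hJm : MeasurableSet J :=
    measurableSet_Icc.preimage (by fun_prop : Measurable fun r : ℝ => 1 - r ^ a₁)
  have h2k : (0 : ℝ) < 2 ^ (-(k : ℝ)) := by positivity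
  set S : ℝ := ((2 : ℝ) ^ (1 - (k : ℝ))) ^ (1 / a₂) with hSdef
  have hS : 0 < S := by positivity
  have hr1 : ∀ r ∈ J ∩ Ioi 0, r < 1 := by
    intro r hr
    by_contra hcon
    have := Real.one_le_rpow (not_lt.1 hcon) (by linarith : 0 ≤ a₁)
    linarith [hr.1.1]
  set H : Rn n → ℝ≥0∞ := fun y => ENNReal.ofReal (f (x - t₁ • y)) *
      ENNReal.ofReal ((w ‖y‖) ^ ((n : ℝ) - a₂)) * sphAvgE n g x (t₂ * w ‖y‖) with hH
  have hfm : Measurable fun y : Rn n => ENNReal.ofReal (f (x - t₁ • y)) :=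
    (hf.comp (by fun_prop)).ennreal_ofReal
  have hHm : Measurable H := by
    refine (hfm.mul ?_).mul ?_
    · fun_prop
    · exact hsm.comp (by fun_prop)
  set F := sphMax n f x with hF
  set P : ℝ → ℝ≥0∞ := fun s => ENNReal.ofReal (s ^ (n - 1)) * sphAvgE n g x (t₂ * s) with hP
  have hPm : Measurable P := by
    refine Measurable.mul (by fun_prop) (hsm.comp (by fun_prop))
  have himg : w '' (J ∩ Ioi 0) ⊆ Ioc 0 S := by
    rintro _ ⟨r, hr, rfl⟩
    have hu : 0 < 1 - r ^ a₁ := h2k.trans_le hr.1.1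
    refine ⟨by simp only [hw]; positivity, ?_⟩
    exact Real.rpow_le_rpow hu.le hr.1.2 (by positivity)
  have hcv : ∫⁻ s in w '' (J ∩ Ioi 0), P s = ∫⁻ r in J ∩ Ioi 0, ENNReal.ofReal |w' r| * P (w r) := by
    apply lintegral_image_eq_lintegral_abs_deriv_mul (hJm.inter measurableSet_Ioi)
    · intro r hr
      have hu : 0 < 1 - r ^ a₁ := h2k.trans_le hr.1.1
      have hr0 : (0 : ℝ) < r := hr.2
      have := (((Real.hasDerivAt_rpow_const (p := a₁) (Or.inl hr0.ne')).const_sub 1).rpow_const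
        (p := 1 / a₂) (Or.inl hu.ne'))
      exact this.hasDerivWithinAt
    · intro r hr s hs hrs
      have hu : 0 < 1 - r ^ a₁ := h2k.trans_le hr.1.1
      have hv : 0 < 1 - s ^ a₁ := h2k.trans_le hs.1.1
      have h1 := (Real.rpow_left_inj hu.le hv.le (by positivity : 1 / a₂ ≠ 0)).1 hrs
      exact (Real.rpow_left_inj (le_of_lt hr.2) (le_of_lt hs.2) ha₁0.ne').1 (by linarith)
  calc dyadicAvg n a₁ a₂ k f g t₁ t₂ x = ∫⁻ y, D.indicator H y := by
        rw [lintegral_indicator hDm]; rfl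
    _ = ∫⁻ r in Ioi (0 : ℝ), ENNReal.ofReal (r ^ (n - 1)) *
          ∫⁻ θ : sphere (0 : Rn n) 1, D.indicator H (r • (θ : Rn n))
            ∂(volume : Measure (Rn n)).toSphere := polar_lintegral n hn _ (hHm.indicator hDm)
    _ ≤ ∫⁻ r in Ioi (0 : ℝ), J.indicator (fun r => C * F * ENNReal.ofReal a₂ *
          (ENNReal.ofReal |w' r| * P (w r))) r := by
        refine setLIntegral_mono' measurableSet_Ioi fun r hr => ?_
        have hr0 : (0 : ℝ) < r := hr
        have hnorm : ∀ θ : sphere (0 : Rn n) 1, ‖r • (θ : Rn n)‖ = r := by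
          intro θ
          rw [norm_smul, Real.norm_eq_abs, abs_of_pos hr0]; simp
        have hmem : ∀ θ : sphere (0 : Rn n) 1, r • (θ : Rn n) ∈ D ↔ r ∈ J := by
          intro θ
          change (_ ≤ 1 - ‖r • (θ : Rn n)‖ ^ a₁ ∧ 1 - ‖r • (θ : Rn n)‖ ^ a₁ ≤ _) ↔ _
          rw [hnorm]; rfl
        by_cases hrJ : r ∈ J
        · have hu : 0 < 1 - r ^ a₁ := h2k.trans_le hrJ.1
          have e : ∀ θ : sphere (0 : Rn n) 1, D.indicator H (r • (θ : Rn n)) =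
              ENNReal.ofReal (f (x - (t₁ * r) • (θ : Rn n))) *
              (ENNReal.ofReal ((w r) ^ ((n : ℝ) - a₂)) * sphAvgE n g x (t₂ * w r)) := by
            intro θ
            rw [indicator_of_mem ((hmem θ).2 hrJ)]
            simp only [hH, hnorm, smul_smul, mul_assoc]
          have hfm2 : Measurable fun θ : sphere (0 : Rn n) 1 =>
              ENNReal.ofReal (f (x - (t₁ * r) • (θ : Rn n))) :=
            (hf.comp (by fun_prop)).ennreal_ofReal
          simp_rw [e]
          rw [lintegral_mul_const _ hfm2, indicator_of_mem hrJ]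
          have hsph : ∫⁻ θ : sphere (0 : Rn n) 1, ENNReal.ofReal (f (x - (t₁ * r) • (θ : Rn n)))
              ∂(volume : Measure (Rn n)).toSphere ≤ C * F := by
            refine (lintegral_mono' hC1 le_rfl).trans ?_
            rw [lintegral_smul_measure, smul_eq_mul, ← sphAvgE_eq n hn]
            gcongr
            exact sphAvgE_le_sphMax n f x _ (by positivity)
          have hjac := jac_ineq n hn a₁ a₂ ha₁ ha₂ ha₁n r hr0 (hr1 r ⟨hrJ, hr⟩).le hu
          have hjac' : ENNReal.ofReal (r ^ (n - 1)) * ENNReal.ofReal ((w r) ^ ((n : ℝ) - a₂)) ≤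
              ENNReal.ofReal a₂ * (ENNReal.ofReal |w' r| * ENNReal.ofReal ((w r) ^ (n - 1))) := by
            rw [← ENNReal.ofReal_mul (by positivity), ← ENNReal.ofReal_mul (abs_nonneg _),
              ← ENNReal.ofReal_mul ha₂0.le]
            exact ENNReal.ofReal_le_ofReal hjac
          calc _ = (∫⁻ θ : sphere (0 : Rn n) 1, ENNReal.ofReal (f (x - (t₁ * r) • (θ : Rn n)))
              ∂(volume : Measure (Rn n)).toSphere) * ((ENNReal.ofReal (r ^ (n - 1)) *
                ENNReal.ofReal ((w r) ^ ((n : ℝ) - a₂))) * sphAvgE n g x (t₂ * w r)) := by ring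
            _ ≤ (C * F) * ((ENNReal.ofReal a₂ * (ENNReal.ofReal |w' r| *
                ENNReal.ofReal ((w r) ^ (n - 1)))) * sphAvgE n g x (t₂ * w r)) := by gcongr
            _ = _ := by simp only [hP]; ring
        · have e : ∀ θ : sphere (0 : Rn n) 1, D.indicator H (r • (θ : Rn n)) = 0 := fun θ =>
            indicator_of_notMem (fun h => hrJ ((hmem θ).1 h)) _
          simp_rw [e]
          simp
    _ = C * F * ENNReal.ofReal a₂ * ∫⁻ s in w '' (J ∩ Ioi 0), P s := by
        rw [setLIntegral_indicator hJm, hcv, lintegral_const_mul]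
        exact (by fun_prop : Measurable fun r => ENNReal.ofReal |w' r|).mul (hPm.comp hwm)
    _ ≤ C * F * ENNReal.ofReal a₂ * ∫⁻ s in Ioc 0 S, P s := by
        gcongr
    _ ≤ C * F * ENNReal.ofReal a₂ * (C * (ENNReal.ofReal ((2 * S) ^ n) *
          volume (ball (0 : Rn n) 1) * HLMax n g x)) := by
        gcongr
        exact radial_bound n hn C hC2 g hg hg0 x t₂ S ht₂ hS
    _ ≤ C * F * ENNReal.ofReal a₂ * (C * (ENNReal.ofReal (2 ^ (n + 1) * (2 : ℝ) ^ (-(k : ℝ) * n / a₂)) *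
          volume (ball (0 : Rn n) 1) * HLMax n g x)) := by
        gcongr
        rw [mul_pow, pow_succ, mul_assoc]
        gcongr
        rw [hSdef, ← Real.rpow_natCast, ← Real.rpow_mul (by positivity), ← Real.rpow_mul (by norm_num)]
        calc _ ≤ (2 : ℝ) ^ (1 + -(k : ℝ) * n / a₂) := by
              apply Real.rpow_le_rpow_of_exponent_le (by norm_num)
              have : (n : ℝ) / a₂ ≤ 1 := by rw [div_le_one ha₂0]; exact ha₂n.le
              have e : (1 - (k : ℝ)) * (1 / a₂ * n) = n / a₂ + -(k : ℝ) * n / a₂ := by ring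
              first | linarith | nlinarith
          _ = _ := by rw [Real.rpow_add (by norm_num), Real.rpow_one]
    _ = _ := by
        rw [ENNReal.ofReal_mul (by positivity), ENNReal.ofReal_mul ha₂0.le]
        ring

end Helpers

/-- The two pointwise bounds (2.7) and (2.10) of the paper for the dyadic
maximal operators `ℳ^k` in the regime `a₁ ≤ n < a₂`. -/
theorem dyadic_maximal_pointwise_bounds
    (n : ℕ) (hn : 2 ≤ n) (a₁ a₂ : ℝ) (ha₁ : 1 ≤ a₁) (ha₂ : 1 ≤ a₂)
    (ha₁n : a₁ ≤ n) (ha₂n : (n : ℝ) < a₂) :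
    ∃ C : ℝ≥0, ∀ f g : Rn n → ℝ,
      Measurable f → Measurable g → (∀ y, 0 ≤ f y) → (∀ y, 0 ≤ g y) →
      ∀ (x : Rn n) (k : ℕ), 1 ≤ k →
        dyadicMax n a₁ a₂ k f g x ≤
          (C : ℝ≥0∞) * ENNReal.ofReal ((2 : ℝ) ^ ((k : ℝ) * (a₂ - n) / a₂)) *
            HLMax n f x * sphMax n g x ∧
        dyadicMax n a₁ a₂ k f g x ≤
          (C : ℝ≥0∞) * ENNReal.ofReal ((2 : ℝ) ^ (-(k : ℝ) * n / a₂)) *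
            sphMax n f x * HLMax n g x := by
  obtain ⟨C, hC1, hC2⟩ := sphH_comparable n hn
  set V := volume (ball (0 : Rn n) 1) with hV
  have hVtop : V ≠ ∞ := measure_ball_lt_top.ne
  set B : ℝ≥0∞ := C * C * ENNReal.ofReal (a₂ * 2 ^ (n + 1)) * V with hB
  have hBtop : B ≠ ∞ := ENNReal.mul_ne_top (ENNReal.mul_ne_top
    (ENNReal.mul_ne_top ENNReal.coe_ne_top ENNReal.coe_ne_top) ENNReal.ofReal_ne_top) hVtop
  refine ⟨max V.toNNReal B.toNNReal, fun f g hf hg hf0 hg0 x k _ => ⟨?_, ?_⟩⟩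
  · refine iSup₂_le fun t₁ ht₁ => iSup₂_le fun t₂ ht₂ => ?_
    refine (bound_one n a₁ a₂ ha₁ ha₂ ha₂n f g hf hf0 x k t₁ t₂ ht₁ ht₂).trans ?_
    gcongr
    exact (ENNReal.coe_toNNReal hVtop).ge.trans (ENNReal.coe_le_coe.2 (le_max_left _ _))
  · refine iSup₂_le fun t₁ ht₁ => iSup₂_le fun t₂ ht₂ => ?_
    refine (bound_two n hn a₁ a₂ ha₁ ha₂ ha₁n ha₂n C hC1 hC2 f g hf hg hg0 x k t₁ t₂ ht₁ ht₂).trans ?_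
    rw [← hV, ← hB]
    gcongr
    exact (ENNReal.coe_toNNReal hBtop).ge.trans (ENNReal.coe_le_coe.2 (le_max_right _ _))
end
end
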